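/- arXiv:1707.02081 — 2 statements merged into one kernel-verified Lean document; each statement's English description precedes it below -/
import Mathlib

section
/- Let C be a small addable class of finite simple graphs with C_n nonempty for every n ≥ 1. Then the probability that the uniformly random graph R_n(C) on vertex set Fin n is connected is at least 1/√e − o(1); that is, the liminf as n → ∞ of the probability that R_n(C) is connected is at least e^{−1/2}. -/
open Filter Topology FirstOrder

/-- A class of finite simple graphs, given as a property of simple graphs
on arbitrary finite vertex types. -/
abbrev GraphClassOn := ∀ (V : Type) [Finite V], SimpleGraph V → Prop

/-- The class is invariant under graph isomorphism. -/
def ClassIsoInvariant (C : GraphClassOn) : Prop :=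
  ∀ (V W : Type) [Finite V] [Finite W] (G : SimpleGraph V) (H : SimpleGraph W),
    Nonempty (G ≃g H) → (C V G ↔ C W H)

/-- The class is bridge-addable: one may add an edge between two vertices lying in
distinct connected components. -/
def ClassBridgeAddable (C : GraphClassOn) : Prop :=
  ∀ (V : Type) [Finite V] (G : SimpleGraph V) (u v : V),
    C V G → ¬G.Reachable u v → C V (G ⊔ SimpleGraph.fromEdgeSet {s(u, v)})

/-- The class is decomposable: a graph belongs to the class iff each of its connected
components does. -/
def ClassDecomposable (C : GraphClassOn) : Prop :=
  ∀ (V : Type) [Finite V] (G : SimpleGraph V),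
    C V G ↔ ∀ c : G.ConnectedComponent, C c.supp (G.induce c.supp)

/-- Addable = decomposable and bridge-addable. -/
def ClassAddable (C : GraphClassOn) : Prop :=
  ClassDecomposable C ∧ ClassBridgeAddable C

/-- The number of graphs in the class on the vertex set `Fin n`. -/
noncomputable def classCount (C : GraphClassOn) (n : ℕ) : ℕ :=
  Nat.card {G : SimpleGraph (Fin n) // C (Fin n) G}

/-- The class is small: `c_n ≤ d^n · n!` for some real `d`. -/
def ClassSmall (C : GraphClassOn) : Prop :=
  ∃ d : ℝ, ∀ n : ℕ, (classCount C n : ℝ) ≤ d ^ n * n.factorial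

/-- The class is smooth: `c_n / (n · c_{n-1})` tends to a finite limit. -/
def ClassSmooth (C : GraphClassOn) : Prop :=
  ∃ γ : ℝ, Tendsto (fun n : ℕ => (classCount C n : ℝ) / (n * classCount C (n - 1)))
    atTop (𝓝 γ)

/-- The probability that a uniformly random graph from the class on `Fin n`
satisfies the property `P`. -/
noncomputable def classProb (C : GraphClassOn) (n : ℕ) (P : SimpleGraph (Fin n) → Prop) : ℝ :=
  (Nat.card {G : SimpleGraph (Fin n) // C (Fin n) G ∧ P G} : ℝ) / (classCount C n : ℝ)

/-- The probability that a uniformly random *connected* graph from the class on `Fin n`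
satisfies the property `P`. -/
noncomputable def connClassProb (C : GraphClassOn) (n : ℕ)
    (P : SimpleGraph (Fin n) → Prop) : ℝ :=
  (Nat.card {G : SimpleGraph (Fin n) // (C (Fin n) G ∧ G.Connected) ∧ P G} : ℝ) /
    (Nat.card {G : SimpleGraph (Fin n) // C (Fin n) G ∧ G.Connected} : ℝ)

/-- Satisfaction of a first-order sentence in the language of graphs in a simple graph. -/
def SatFO {V : Type} (G : SimpleGraph V) (φ : Language.graph.Sentence) : Prop :=
  letI := G.structure
  V ⊨ φ

/-- The rooted graph `(H, r)` appears in `G` on the vertex set `W`: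
the induced subgraph of `G` on `W` is isomorphic to `H` via an isomorphism sending some
`w ∈ W` to `r`, every edge of `G` joining `W` to its complement is incident on `w`,
and there is exactly one such edge. -/
def AppearsAt {VH V : Type} (H : SimpleGraph VH) (r : VH) (G : SimpleGraph V)
    (W : Set V) : Prop :=
  ∃ (w : V) (hw : w ∈ W) (e : G.induce W ≃g H),
    e ⟨w, hw⟩ = r ∧
    (∀ a ∈ W, ∀ b ∉ W, G.Adj a b → a = w) ∧
    (∃! b, b ∉ W ∧ G.Adj w b)

/-- The rooted graph `(H, r)` appears in `G`. -/
def Appears {VH V : Type} (H : SimpleGraph VH) (r : VH) (G : SimpleGraph V) : Prop :=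
  ∃ W : Set V, AppearsAt H r G W

/-- The number of appearances of the rooted graph `(H, r)` in `G`, i.e. the number of
vertex sets `W` witnessing an appearance. -/
noncomputable def numAppearances {VH V : Type} (H : SimpleGraph VH) (r : VH)
    (G : SimpleGraph V) : ℕ :=
  Nat.card {W : Set V // AppearsAt H r G W}

/-- The number of connected components of `G` whose induced subgraph is isomorphic
to `H`. -/
noncomputable def numComponentsIso {V VH : Type} (G : SimpleGraph V)
    (H : SimpleGraph VH) : ℕ :=
  Nat.card {c : G.ConnectedComponent // Nonempty (G.induce c.supp ≃g H)}

/-!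
Let `c n` and `K n` be the numbers of graphs and of connected graphs of the class on `Fin n`.
Bridge-addability makes the expected number of vertices outside a largest component bounded, so
that `c n * (1 - 2 / (S + 1)) ≤ K n * ∑ s ≤ S, c s / s! * ρ s n` with
`ρ s n = n! / (n - s)! * K (n - s) / K n`, and it remains to bound this sum by `exp (1 / 2)` in the
limit.

A pendant copy of a rooted graph is a vertex set carrying a copy of it and joined to the rest by a
single edge at its root. Along an ultrafilter, the laws of the vectors of pendant-copy densities of
uniform connected graphs on `n - s` vertices, weighted by `ρ s n`, converge to measures `μ s`.
Attaching a connected graph on `j` vertices by an edge to a pendant copy of `x` turns it into a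
pendant copy of a larger graph `y`. Counting these attachments shows that the densities
`g s = dμ s / dμ 0` satisfy `g (s + j) * ξ x ≤ g s * ξ y` at almost every point `ξ`.

The rest is pointwise in `ξ`. Let `h V` be the best factor by which attaching `V` multiplies the
entries of `ξ`; it is supermultiplicative along bridges. Give graphs on `n` vertices the weight
`1 / n!`. Small pendant sets of a graph have distinct roots, so the sum `T` of `h` over rooted
connected graphs is at most `1`. A connected graph on `n` vertices has at most `n - 1` bridges, so
the sum of `h` over unrooted connected graphs is at most `T - T ^ 2 / 2 ≤ 1 / 2`. By the exponential
formula the sum of `c s / s! * g s` is then at most `exp (1 / 2)`, and integrating over `μ 0` gives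
the bound.
-/

noncomputable section

open scoped Classical

section Components

variable {α β γ : Type*} {U : SimpleGraph α} {G : SimpleGraph γ}

theorem exists_reachable_of_reachable_embedding (f : U ↪g G)
    (hf : ∀ x z, G.Adj (f x) z → z ∈ Set.range f) {x : α} {z : γ} (h : G.Reachable (f x) z) :
    ∃ y, f y = z ∧ U.Reachable x y := by
  rw [SimpleGraph.reachable_iff_reflTransGen] at h
  induction h with
  | refl => exact ⟨x, rfl, .rfl⟩
  | tail _ hadj ih =>
    obtain ⟨y, rfl, hxy⟩ := ih
    obtain ⟨z, rfl⟩ := hf _ _ hadj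
    exact ⟨z, rfl, hxy.trans (f.map_adj_iff.1 hadj).reachable⟩

theorem mem_supp_connectedComponentMk_iff_of_embedding (f : U ↪g G)
    (hf : ∀ x z, G.Adj (f x) z → z ∈ Set.range f) (x y : α) :
    f y ∈ (G.connectedComponentMk (f x)).supp ↔ y ∈ (U.connectedComponentMk x).supp := by
  simp only [SimpleGraph.ConnectedComponent.mem_supp_iff, SimpleGraph.ConnectedComponent.eq]
  refine ⟨fun h => ?_, fun h => h.map f.toHom⟩
  obtain ⟨y', hy', hxy⟩ := exists_reachable_of_reachable_embedding f hf h.symm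
  exact f.injective hy' ▸ hxy.symm

theorem nonempty_component_iso_of_embedding (f : U ↪g G)
    (hf : ∀ x z, G.Adj (f x) z → z ∈ Set.range f) (x : α) :
    Nonempty (U.induce (U.connectedComponentMk x).supp ≃g
      G.induce (G.connectedComponentMk (f x)).supp) := by
  have hmem := mem_supp_connectedComponentMk_iff_of_embedding f hf x
  refine ⟨⟨Equiv.ofBijective (fun y => ⟨f y, (hmem y).2 y.2⟩) ⟨?_, ?_⟩, f.map_adj_iff⟩⟩
  · exact fun y z hyz => Subtype.ext (f.injective (congrArg Subtype.val hyz))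
  · rintro ⟨z, hz⟩
    obtain ⟨y, rfl, -⟩ := exists_reachable_of_reachable_embedding f hf
      (SimpleGraph.ConnectedComponent.exact hz).symm
    exact ⟨⟨y, (hmem y).1 hz⟩, rfl⟩

theorem mem_range_inl_of_sum_adj {V : SimpleGraph β} (x : α) (z : α ⊕ β)
    (h : (U ⊕g V).Adj (.inl x) z) : z ∈ Set.range Sum.inl := by
  cases z with
  | inl z => exact ⟨z, rfl⟩
  | inr z => simp at h

theorem mem_range_inr_of_sum_adj {V : SimpleGraph β} (y : β) (z : α ⊕ β)
    (h : (U ⊕g V).Adj (.inr y) z) : z ∈ Set.range Sum.inr := by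
  cases z with
  | inl z => simp at h
  | inr z => exact ⟨z, rfl⟩

theorem sum_comap_inl_inr_eq (H : SimpleGraph (α ⊕ β)) (h : ∀ a b, ¬H.Adj (.inl a) (.inr b)) :
    H.comap Sum.inl ⊕g H.comap Sum.inr = H := by
  ext (a | a) (b | b)
  · simp
  · simp [h]
  · simp [h, H.adj_comm (.inr a)]
  · simp

theorem ClassDecomposable.sum_iff {C : GraphClassOn} (hD : ClassDecomposable C)
    (hI : ClassIsoInvariant C) {α β : Type} [Finite α] [Finite β] (U : SimpleGraph α)
    (V : SimpleGraph β) : C (α ⊕ β) (U ⊕g V) ↔ C α U ∧ C β V := by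
  have hl x := hI _ _ _ _ (nonempty_component_iso_of_embedding
    (SimpleGraph.Embedding.sumInl : U ↪g U ⊕g V) mem_range_inl_of_sum_adj x)
  have hr x := hI _ _ _ _ (nonempty_component_iso_of_embedding
    (SimpleGraph.Embedding.sumInr : V ↪g U ⊕g V) mem_range_inr_of_sum_adj x)
  rw [hD, hD, hD]
  simp only [SimpleGraph.ConnectedComponent.forall, Sum.forall]
  exact and_congr (forall_congr' fun x => (hl x).symm) (forall_congr' fun x => (hr x).symm)

end Components

section BridgeJoin

open SimpleGraph (edge)

variable {α β γ : Type*}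

/-- The graph `U + V + ab` obtained by adding an edge between the vertices `a` of `U` and `b` of
`V` to the disjoint union of `U` and `V`. -/
def bridgeJoin (U : SimpleGraph α) (V : SimpleGraph β) (a : α) (b : β) : SimpleGraph (α ⊕ β) :=
  (U ⊕g V) ⊔ edge (.inl a) (.inr b)

variable {U : SimpleGraph α} {V : SimpleGraph β} {a : α} {b : β}

@[simp]
theorem bridgeJoin_adj_inl_inl {x y : α} :
    (bridgeJoin U V a b).Adj (.inl x) (.inl y) ↔ U.Adj x y := by
  simp [bridgeJoin, SimpleGraph.edge_adj]

@[simp]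
theorem bridgeJoin_adj_inr_inr {x y : β} :
    (bridgeJoin U V a b).Adj (.inr x) (.inr y) ↔ V.Adj x y := by
  simp [bridgeJoin, SimpleGraph.edge_adj]

@[simp]
theorem bridgeJoin_adj_inl_inr {x : α} {y : β} :
    (bridgeJoin U V a b).Adj (.inl x) (.inr y) ↔ x = a ∧ y = b := by
  simp [bridgeJoin, SimpleGraph.edge_adj]

@[simp]
theorem bridgeJoin_adj_inr_inl {x : α} {y : β} :
    (bridgeJoin U V a b).Adj (.inr y) (.inl x) ↔ x = a ∧ y = b := by
  simp [SimpleGraph.adj_comm]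

theorem bridgeJoin_connected (hU : U.Connected) (hV : V.Connected) :
    (bridgeJoin U V a b).Connected :=
  hU.sum_sup_edge hV

theorem ClassAddable.bridgeJoin_mem {C : GraphClassOn} (hA : ClassAddable C)
    (hI : ClassIsoInvariant C) {α β : Type} [Finite α] [Finite β] {U : SimpleGraph α}
    {V : SimpleGraph β} (hU : C α U) (hV : C β V) (a : α) (b : β) :
    C (α ⊕ β) (bridgeJoin U V a b) :=
  hA.2 _ _ _ _ ((hA.1.sum_iff hI U V).2 ⟨hU, hV⟩) (SimpleGraph.not_reachable_sum_inl_inr a b)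

theorem bridgeJoin_deleteEdges :
    (bridgeJoin U V a b).deleteEdges {s(.inl a, .inr b)} = U ⊕g V := by
  ext (x | x) (y | y) <;> simp [bridgeJoin]

theorem sum_reachable_inl_iff (hU : U.Connected) {z : α ⊕ β} :
    (U ⊕g V).Reachable (.inl a) z ↔ z ∈ Set.range Sum.inl := by
  constructor
  · intro h
    obtain ⟨y, hy, -⟩ := exists_reachable_of_reachable_embedding
      (SimpleGraph.Embedding.sumInl : U ↪g U ⊕g V) mem_range_inl_of_sum_adj h
    exact ⟨y, hy⟩
  · rintro ⟨y, rfl⟩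
    exact (hU a y).map (SimpleGraph.Embedding.sumInl : U ↪g U ⊕g V).toHom

/-- Swapping the two sides of a bridge. -/
def bridgeJoinComm (U : SimpleGraph α) (V : SimpleGraph β) (a : α) (b : β) :
    bridgeJoin U V a b ≃g bridgeJoin V U b a where
  toEquiv := Equiv.sumComm α β
  map_rel_iff' := by rintro (x | x) (y | y) <;> simp [and_comm]

/-- Reassociation of two bridges that both end on the left side of the outer one. -/
def bridgeJoinAssoc (U : SimpleGraph α) (V : SimpleGraph β) (W : SimpleGraph γ) (a : α) (b b' : β)
    (c : γ) : bridgeJoin (bridgeJoin U V a b) W (.inr b') c ≃g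
      bridgeJoin U (bridgeJoin V W b' c) a (.inl b) where
  toEquiv := Equiv.sumAssoc α β γ
  map_rel_iff' := by rintro ((x | x) | x) ((y | y) | y) <;> simp

/-- Replacing the two sides of a bridge by isomorphic graphs. -/
def bridgeJoinCongr {α' β' : Type*} {U' : SimpleGraph α'} {V' : SimpleGraph β'} (e : U ≃g U')
    (f : V ≃g V') (a : α) (b : β) : bridgeJoin U V a b ≃g bridgeJoin U' V' (e a) (f b) where
  toEquiv := e.toEquiv.sumCongr f.toEquiv
  map_rel_iff' := by rintro (x | x) (y | y) <;> simp [e.map_adj_iff, f.map_adj_iff]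

end BridgeJoin

section Bridges

open scoped Finset

/-- The spanning subgraph of `G` formed by the bridges of `G`. -/
def bridgeForest {α : Type*} (G : SimpleGraph α) : SimpleGraph α :=
  .fromEdgeSet {e ∈ G.edgeSet | G.IsBridge e}

variable {α : Type*} {G : SimpleGraph α}

theorem bridgeForest_adj {a b : α} :
    (bridgeForest G).Adj a b ↔ G.Adj a b ∧ G.IsBridge s(a, b) := by
  simp only [bridgeForest, SimpleGraph.fromEdgeSet_adj, Set.mem_ofPred_eq, SimpleGraph.mem_edgeSet]
  exact ⟨And.left, fun h => ⟨h, h.1.ne⟩⟩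

theorem bridgeForest_isAcyclic (G : SimpleGraph α) : (bridgeForest G).IsAcyclic := by
  have hle : bridgeForest G ≤ G := fun a b h => (bridgeForest_adj.1 h).1
  refine SimpleGraph.isAcyclic_iff_forall_adj_isBridge.2 fun a b h => ?_
  exact (bridgeForest_adj.1 h).2.anti hle

theorem card_filter_bridgeForest_adj_add_two_le [Fintype α] [Nonempty α] (G : SimpleGraph α) :
    #{p : α × α | (bridgeForest G).Adj p.1 p.2} + 2 ≤ 2 * Fintype.card α := by
  obtain ⟨T, hGT, -, hT⟩ :=
    (SimpleGraph.connected_top (V := α)).exists_isTree_le_of_le_of_isAcyclic le_top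
      (bridgeForest_isAcyclic G)
  have hdart : #{p : α × α | (bridgeForest G).Adj p.1 p.2} ≤ Fintype.card T.Dart := by
    refine (Finset.card_le_card fun p hp => ?_).trans
      (Finset.card_image_le (s := Finset.univ) (f := SimpleGraph.Dart.toProd))
    exact Finset.mem_image.2 ⟨⟨p, hGT (Finset.mem_filter.1 hp).2⟩, Finset.mem_univ _, rfl⟩
  have hcard := hT.card_edgeFinset
  rw [T.dart_card_eq_twice_card_edges] at hdart
  lia

end Bridges

section Counting

open scoped Finset
open SimpleGraph (edge)

namespace GraphClassOn

/-- The members of the class `C` on the vertex set `Fin n`; there are `c_n` of them. -/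
def graphs (C : GraphClassOn) (n : ℕ) : Finset (SimpleGraph (Fin n)) :=
  {G | C (Fin n) G}

/-- The connected members of the class `C` on the vertex set `Fin n`. -/
def connectedGraphs (C : GraphClassOn) (n : ℕ) : Finset (SimpleGraph (Fin n)) :=
  {G | C (Fin n) G ∧ G.Connected}

variable {C : GraphClassOn} {n : ℕ} {G : SimpleGraph (Fin n)}

@[simp]
theorem mem_graphs : G ∈ C.graphs n ↔ C (Fin n) G := by
  simp [graphs]

@[simp]
theorem mem_connectedGraphs : G ∈ C.connectedGraphs n ↔ C (Fin n) G ∧ G.Connected := by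
  simp [connectedGraphs]

theorem classProb_connected_eq (C : GraphClassOn) (n : ℕ) :
    classProb C n (fun G => G.Connected) = #(C.connectedGraphs n) / #(C.graphs n) := by
  simp [classProb, classCount, Nat.card_eq_fintype_card, Fintype.card_subtype, graphs,
    connectedGraphs]

end GraphClassOn

/-- The order-preserving identification of `Fin n` with the disjoint union of `A` and its
complement. -/
def finsetSplit {n : ℕ} (A : Finset (Fin n)) : Fin #A ⊕ Fin #Aᶜ ≃ Fin n :=
  finSumEquivOfFinset rfl rfl

theorem finsetSplit_inl_mem {n : ℕ} (A : Finset (Fin n)) (i : Fin #A) :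
    finsetSplit A (.inl i) ∈ A := by
  simp [finsetSplit, finSumEquivOfFinset_inl]

theorem finsetSplit_inr_notMem {n : ℕ} (A : Finset (Fin n)) (i : Fin #Aᶜ) :
    finsetSplit A (.inr i) ∉ A := by
  rw [← Finset.mem_compl]
  simp [finsetSplit, finSumEquivOfFinset_inr]

theorem mem_iff_mem_range_finsetSplit_inl {n : ℕ} {A : Finset (Fin n)} {x : Fin n} :
    x ∈ A ↔ ∃ i, finsetSplit A (.inl i) = x := by
  refine ⟨fun hx => ?_, by rintro ⟨i, rfl⟩; exact finsetSplit_inl_mem A i⟩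
  obtain ⟨i | i, rfl⟩ := (finsetSplit A).surjective x
  · exact ⟨i, rfl⟩
  · exact absurd hx (finsetSplit_inr_notMem A i)

/-- The vertex set of the connected component of `x`. -/
def componentFinset {α : Type*} [Fintype α] (G : SimpleGraph α) (x : α) : Finset α :=
  {y | G.Reachable x y}

@[simp]
theorem mem_componentFinset {α : Type*} [Fintype α] {G : SimpleGraph α} {x y : α} :
    y ∈ componentFinset G x ↔ G.Reachable x y := by
  simp [componentFinset]

section Components

variable {n : ℕ} {G : SimpleGraph (Fin n)} {A : Finset (Fin n)} {x : Fin n}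

theorem comap_finsetSplit_eq_sum (h : componentFinset G x = A) :
    (G.comap (finsetSplit A)).comap Sum.inl ⊕g (G.comap (finsetSplit A)).comap Sum.inr =
      G.comap (finsetSplit A) := by
  have hmem {y} : y ∈ A ↔ G.Reachable x y := by rw [← h, mem_componentFinset]
  refine sum_comap_inl_inr_eq _ fun a b hab => finsetSplit_inr_notMem A b ?_
  exact hmem.2 ((hmem.1 (finsetSplit_inl_mem A a)).trans
    (show G.Adj _ _ from hab).reachable)

theorem connected_comap_finsetSplit_inl (h : componentFinset G x = A) :
    ((G.comap (finsetSplit A)).comap Sum.inl).Connected := by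
  have hmem {y} : y ∈ A ↔ G.Reachable x y := by rw [← h, mem_componentFinset]
  obtain ⟨i, rfl⟩ := mem_iff_mem_range_finsetSplit_inl.1 (hmem.2 .rfl)
  refine SimpleGraph.connected_iff_exists_forall_reachable _ |>.2 ⟨i, fun j => ?_⟩
  have hij : (G.comap (finsetSplit A)).Reachable (.inl i) (.inl j) :=
    (SimpleGraph.Iso.reachable_iff (φ := SimpleGraph.Iso.comap (finsetSplit A) G)).1
      (hmem.1 (finsetSplit_inl_mem A j))
  rw [← comap_finsetSplit_eq_sum h] at hij
  obtain ⟨k, hk, hik⟩ := exists_reachable_of_reachable_embedding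
    SimpleGraph.Embedding.sumInl mem_range_inl_of_sum_adj hij
  exact Sum.inl_injective hk ▸ hik

end Components

namespace GraphClassOn

variable {C : GraphClassOn}

theorem card_filter_componentFinset_eq_le (hI : ClassIsoInvariant C) (hD : ClassDecomposable C)
    {n : ℕ} (A : Finset (Fin n)) :
    #{G ∈ C.graphs n | ∃ x, componentFinset G x = A} ≤
      #(C.connectedGraphs #A) * #(C.graphs #Aᶜ) := by
  rw [← Finset.card_product]
  refine Finset.card_le_card_of_injOn (fun G => ((G.comap (finsetSplit A)).comap Sum.inl,
    (G.comap (finsetSplit A)).comap Sum.inr)) (fun G hG => ?_) (fun G hG H hH hGH => ?_)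
  · obtain ⟨hC, x, hx⟩ := Finset.mem_filter.1 hG
    have hsum := (hI _ _ _ _ ⟨SimpleGraph.Iso.comap (finsetSplit A) G⟩).2 (mem_graphs.1 hC)
    rw [← comap_finsetSplit_eq_sum hx, hD.sum_iff hI] at hsum
    simpa only [Finset.coe_product, Set.mem_prod, Finset.mem_coe, mem_connectedGraphs,
      mem_graphs] using ⟨⟨hsum.1, connected_comap_finsetSplit_inl hx⟩, hsum.2⟩
  · obtain ⟨-, x, hx⟩ := Finset.mem_filter.1 hG
    obtain ⟨-, y, hy⟩ := Finset.mem_filter.1 hH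
    simp only [Prod.mk.injEq] at hGH
    apply (finsetSplit A).symm.simpleGraph.injective
    change G.comap (finsetSplit A) = H.comap (finsetSplit A)
    rw [← comap_finsetSplit_eq_sum hx, ← comap_finsetSplit_eq_sum hy, hGH.1, hGH.2]

theorem mul_card_graphs_le_sum (hI : ClassIsoInvariant C) (hD : ClassDecomposable C) (n : ℕ) :
    n * #(C.graphs n) ≤
      ∑ A : Finset (Fin n), #A * (#(C.connectedGraphs #A) * #(C.graphs #Aᶜ)) := by
  have hfiber (x : Fin n) : #(C.graphs n) ≤
      ∑ A : Finset (Fin n), if x ∈ A then #(C.connectedGraphs #A) * #(C.graphs #Aᶜ) else 0 := by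
    rw [Finset.card_eq_sum_card_fiberwise (f := (componentFinset · x)) (t := Finset.univ)
      (fun _ _ => Finset.mem_coe.2 (Finset.mem_univ _))]
    refine Finset.sum_le_sum fun A _ => ?_
    split_ifs with hx
    · refine (Finset.card_le_card fun G hG => ?_).trans (card_filter_componentFinset_eq_le hI hD A)
      exact Finset.mem_filter.2 ((Finset.mem_filter.1 hG).imp_right fun h => ⟨x, h⟩)
    · refine (Finset.card_eq_zero.2 (Finset.filter_false_of_mem fun G _ h => hx ?_)).le
      exact h ▸ mem_componentFinset.2 .rfl
  calc n * #(C.graphs n) = ∑ _x : Fin n, #(C.graphs n) := by simp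
    _ ≤ _ := Finset.sum_le_sum fun x _ => hfiber x
    _ = _ := by rw [Finset.sum_comm]; simp

theorem card_filter_exists_card_componentFinset_compl_le (hI : ClassIsoInvariant C)
    (hD : ClassDecomposable C) (n S : ℕ) :
    #{G ∈ C.graphs n | ∃ x, #(componentFinset G x)ᶜ ≤ S} ≤
      ∑ A : Finset (Fin n) with #Aᶜ ≤ S, #(C.connectedGraphs #A) * #(C.graphs #Aᶜ) := by
  have hsub : {G ∈ C.graphs n | ∃ x, #(componentFinset G x)ᶜ ≤ S} ⊆
      ({A : Finset (Fin n) | #Aᶜ ≤ S} : Finset _).biUnion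
        fun A => {G ∈ C.graphs n | ∃ x, componentFinset G x = A} := by
    intro G hG
    obtain ⟨hC, x, hx⟩ := Finset.mem_filter.1 hG
    exact Finset.mem_biUnion.2 ⟨componentFinset G x, by simpa using hx, by simpa using hC⟩
  exact (Finset.card_le_card hsub).trans (Finset.card_biUnion_le.trans
    (Finset.sum_le_sum fun A _ => card_filter_componentFinset_eq_le hI hD A))

end GraphClassOn

theorem card_mul_le_card_filter_not_reachable {α : Type*} [Fintype α] [DecidableEq α]
    (G : SimpleGraph α) {S : ℕ}
    (hS : ∀ x, S < #(componentFinset G x)ᶜ) :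
    Fintype.card α * (S + 1) ≤ #{p : α × α | ¬G.Reachable p.1 p.2} := by
  calc Fintype.card α * (S + 1) = ∑ _x : α, (S + 1) := by simp
    _ ≤ ∑ x : α, #{y | ¬G.Reachable x y} := Finset.sum_le_sum fun x _ => by
        simpa [componentFinset, Finset.compl_filter] using hS x
    _ = _ := by simp only [Finset.card_filter, Fintype.sum_prod_type]

theorem sup_edge_deleteEdges_of_not_adj {α : Type*} {G : SimpleGraph α} {a b : α}
    (h : ¬G.Adj a b) : (G ⊔ edge a b).deleteEdges {s(a, b)} = G := by
  ext x y
  simp only [SimpleGraph.deleteEdges_adj, SimpleGraph.sup_adj, SimpleGraph.edge_adj]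
  grind [SimpleGraph.adj_comm]

theorem bridgeForest_sup_edge_adj {α : Type*} {G : SimpleGraph α} {a b : α}
    (h : ¬G.Reachable a b) : (bridgeForest (G ⊔ edge a b)).Adj a b := by
  have hab : a ≠ b := by rintro rfl; exact h .rfl
  exact bridgeForest_adj.2
    ⟨by simp [SimpleGraph.edge_adj, hab], SimpleGraph.isBridge_sup_edge.2 (.of_not_reachable h)⟩

namespace GraphClassOn

theorem sum_card_filter_not_reachable_le {C : GraphClassOn} (hB : ClassBridgeAddable C) (n : ℕ) :
    ∑ G ∈ C.graphs n, #{p : Fin n × Fin n | ¬G.Reachable p.1 p.2} ≤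
      ∑ G ∈ C.graphs n, #{p : Fin n × Fin n | (bridgeForest G).Adj p.1 p.2} := by
  simp only [← Finset.card_sigma]
  refine Finset.card_le_card_of_injOn (fun z => ⟨z.1 ⊔ edge z.2.1 z.2.2, z.2⟩)
    (fun ⟨G, a, b⟩ hG => ?_) (fun ⟨G, a, b⟩ hG ⟨H, c, d⟩ hH hGH => ?_)
  · simp only [Finset.mem_coe, Finset.mem_sigma, Finset.mem_filter, Finset.mem_univ, true_and,
      mem_graphs] at hG ⊢
    exact ⟨hB _ _ _ _ hG.1 hG.2, bridgeForest_sup_edge_adj hG.2⟩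
  · simp only [Finset.mem_coe, Finset.mem_sigma, Finset.mem_filter, Finset.mem_univ,
      true_and] at hG hH
    simp only [Sigma.mk.injEq, heq_eq_eq, Prod.mk.injEq] at hGH
    obtain ⟨hGH, rfl, rfl⟩ := hGH
    rw [← sup_edge_deleteEdges_of_not_adj fun h => hG.2 h.reachable, hGH,
      sup_edge_deleteEdges_of_not_adj fun h => hH.2 h.reachable]

theorem card_filter_lt_card_componentFinset_compl_mul_le {C : GraphClassOn}
    (hB : ClassBridgeAddable C) {n : ℕ} (hn : n ≠ 0) (S : ℕ) :
    #{G ∈ C.graphs n | ∀ x, S < #(componentFinset G x)ᶜ} * (S + 1) ≤ 2 * #(C.graphs n) := by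
  have : Nonempty (Fin n) := ⟨⟨0, Nat.pos_of_ne_zero hn⟩⟩
  set T : Finset (SimpleGraph (Fin n)) := {G ∈ C.graphs n | ∀ x, S < #(componentFinset G x)ᶜ}
  refine Nat.le_of_mul_le_mul_left ?_ (Nat.pos_of_ne_zero hn)
  calc n * (#T * (S + 1)) = #T • (n * (S + 1)) := by rw [smul_eq_mul]; ring
    _ ≤ ∑ G ∈ T, #{p : Fin n × Fin n | ¬G.Reachable p.1 p.2} :=
        Finset.card_nsmul_le_sum _ _ _ fun G hG => by
          simpa using card_mul_le_card_filter_not_reachable G (Finset.mem_filter.1 hG).2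
    _ ≤ ∑ G ∈ C.graphs n, #{p : Fin n × Fin n | ¬G.Reachable p.1 p.2} :=
        Finset.sum_le_sum_of_subset (Finset.filter_subset _ _)
    _ ≤ ∑ G ∈ C.graphs n, #{p : Fin n × Fin n | (bridgeForest G).Adj p.1 p.2} :=
        sum_card_filter_not_reachable_le hB n
    _ ≤ #(C.graphs n) • (2 * n) := Finset.sum_le_card_nsmul _ _ _ fun G _ => by
        have := card_filter_bridgeForest_adj_add_two_le G
        rw [Fintype.card_fin] at this
        lia
    _ = n * (2 * #(C.graphs n)) := by rw [smul_eq_mul]; ring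

end GraphClassOn

end Counting

section PendantSets

open scoped Finset

variable {α β γ : Type*}

theorem exists_adj_mem_notMem_of_preconnected_induce {G : SimpleGraph α} {A : Set α}
    (hA : (G.induce A).Preconnected) (D : Set α) {x y : α} (hxA : x ∈ A) (hyA : y ∈ A)
    (hxD : x ∈ D) (hyD : y ∉ D) : ∃ c ∈ A, ∃ d ∈ A, c ∈ D ∧ d ∉ D ∧ G.Adj c d := by
  obtain ⟨p⟩ := hA ⟨x, hxA⟩ ⟨y, hyA⟩
  obtain ⟨d, -, hfst, hsnd⟩ := p.exists_boundary_dart (Subtype.val ⁻¹' D) hxD hyD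
  exact ⟨_, d.fst.2, _, d.snd.2, hfst, hsnd, d.adj⟩

/-- The edge from `r ∈ A` to `b ∉ A` is the only edge of `G` leaving `A`. -/
structure IsSoleExit (G : SimpleGraph α) (A : Finset α) (r b : α) : Prop where
  mem : r ∈ A
  notMem : b ∉ A
  adj_iff : ∀ x ∈ A, ∀ z ∉ A, G.Adj x z ↔ x = r ∧ z = b

/-- `A` spans a connected subgraph of `G` that is attached to the rest of `G` by a single edge,
which ends in the root `r ∈ A`. -/
structure IsPendantSet (G : SimpleGraph α) (A : Finset α) (r : α) : Prop where
  connected : (G.induce (A : Set α)).Connected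
  exists_isSoleExit : ∃ b, IsSoleExit G A r b

variable {G : SimpleGraph α} {A A' : Finset α} {r r' b b' : α}

theorem IsSoleExit.mem_of_not_subset (hA : (G.induce (A : Set α)).Connected)
    (h' : IsSoleExit G A' r' b') {x : α} (hx : x ∈ A) (hx' : x ∈ A') (hAA' : ¬A ⊆ A') :
    r' ∈ A ∧ b' ∈ A := by
  obtain ⟨y, hy, hy'⟩ := Finset.not_subset.1 hAA'
  obtain ⟨c, hc, d, hd, hc', hd', hcd⟩ := exists_adj_mem_notMem_of_preconnected_induce
    hA.preconnected A' hx hy hx' hy'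
  obtain ⟨rfl, rfl⟩ := (h'.adj_iff c hc' d hd').1 hcd
  exact ⟨hc, hd⟩

theorem IsPendantSet.subset_or_subset [Fintype α] (hG : G.Connected) (h : IsPendantSet G A r)
    (h' : IsPendantSet G A' r') (hcard : #A + #A' < Fintype.card α) {x : α} (hx : x ∈ A)
    (hx' : x ∈ A') : A ⊆ A' ∨ A' ⊆ A := by
  by_contra! hnot
  obtain ⟨b, hb⟩ := h.exists_isSoleExit
  obtain ⟨b', hb'⟩ := h'.exists_isSoleExit
  have hmem := hb.mem_of_not_subset h'.connected hx' hx hnot.2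
  have hmem' := hb'.mem_of_not_subset h.connected hx hx' hnot.1
  obtain ⟨w, hw⟩ : ∃ w, w ∉ A ∪ A' := by
    by_contra! hall
    have := Finset.card_union_le A A'
    rw [Finset.eq_univ_iff_forall.2 hall, Finset.card_univ] at this
    lia
  obtain ⟨p⟩ := hG x w
  obtain ⟨d, -, hfst, hsnd⟩ := p.exists_boundary_dart ↑(A ∪ A') (by simp [hx]) (by simpa using hw)
  simp only [Finset.coe_union, Set.mem_union, Finset.mem_coe, not_or] at hfst hsnd
  rcases hfst with hfst | hfst
  · exact hsnd.2 (((hb.adj_iff _ hfst _ hsnd.1).1 d.adj).2 ▸ hmem.2)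
  · exact hsnd.1 (((hb'.adj_iff _ hfst _ hsnd.2).1 d.adj).2 ▸ hmem'.2)

theorem IsPendantSet.eq_of_card_eq [Fintype α] (hG : G.Connected) (h : IsPendantSet G A r)
    (h' : IsPendantSet G A' r') (hcard : #A + #A' < Fintype.card α) (hAA' : #A = #A') {x : α}
    (hx : x ∈ A) (hx' : x ∈ A') : A = A' :=
  (h.subset_or_subset hG h' hcard hx hx').elim
    (fun hs => Finset.eq_of_subset_of_card_le hs hAA'.ge)
    fun hs => (Finset.eq_of_subset_of_card_le hs hAA'.le).symm

theorem IsPendantSet.eq_of_subset (h : IsPendantSet G A r) (h' : IsPendantSet G A' r)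
    (hs : A' ⊆ A) : A = A' := by
  refine hs.antisymm' (by_contra fun hnot => ?_)
  obtain ⟨b, hb⟩ := h.exists_isSoleExit
  obtain ⟨b', hb'⟩ := h'.exists_isSoleExit
  have hmem := hb'.mem_of_not_subset h.connected hb.mem hb'.mem hnot
  have hrb : G.Adj r b := (hb.adj_iff r hb.mem b hb.notMem).2 ⟨rfl, rfl⟩
  obtain ⟨-, rfl⟩ := (hb'.adj_iff r hb'.mem b fun h => hb.notMem (hs h)).1 hrb
  exact hb.notMem hmem.2

theorem IsPendantSet.eq_of_root_eq [Fintype α] (hG : G.Connected) (h : IsPendantSet G A r)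
    (h' : IsPendantSet G A' r) (hcard : #A + #A' < Fintype.card α) : A = A' := by
  obtain ⟨b, hb⟩ := h.exists_isSoleExit
  obtain ⟨b', hb'⟩ := h'.exists_isSoleExit
  exact (h.subset_or_subset hG h' hcard hb.mem hb'.mem).elim
    (fun hs => (h'.eq_of_subset h hs).symm) fun hs => h.eq_of_subset h' hs

theorem card_filter_isPendantSet_le [Fintype α] (hG : G.Connected) {J : ℕ}
    (hJ : 2 * J < Fintype.card α) :
    #{A : Finset α | #A ≤ J ∧ ∃ r, IsPendantSet G A r} ≤ Fintype.card α := by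
  have : Nonempty α := hG.nonempty
  choose! root hroot using fun (A : Finset α) (h : ∃ r, IsPendantSet G A r) => h
  refine Finset.card_le_card_of_injOn root (t := Finset.univ) (fun _ _ => Finset.mem_univ _)
    (fun A hA A' hA' heq => ?_)
  simp only [Finset.coe_filter, Finset.mem_univ, true_and, Set.mem_ofPred_eq] at hA hA'
  exact (hroot A hA.2).eq_of_root_eq hG (heq ▸ hroot A' hA'.2) (by lia)

end PendantSets

section PendantCopies

open scoped Finset

variable {α β γ : Type*}

/-- The embedding `φ` exhibits a pendant copy in `G` of the connected graph `P` rooted at `r`: its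
image induces `P` and is attached to the rest of `G` by a single edge, which ends in the root. -/
structure IsPendantCopy [Fintype β] (P : SimpleGraph β) (r : β) (G : SimpleGraph α) (φ : β ↪ α) :
    Prop where
  connected : P.Connected
  comap_eq : G.comap φ = P
  exists_isSoleExit : ∃ b, IsSoleExit G (Finset.univ.map φ) (φ r) b

/-- The pendant copies in `G` of the graph `P` rooted at `r`. -/
def pendantCopies [Fintype α] [Fintype β] (P : SimpleGraph β) (r : β) (G : SimpleGraph α) :
    Finset (β ↪ α) :=
  {φ | IsPendantCopy P r G φ}

variable [Fintype β] {P : SimpleGraph β} {r : β} {G : SimpleGraph α} {φ : β ↪ α}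

@[simp]
theorem mem_pendantCopies [Fintype α] : φ ∈ pendantCopies P r G ↔ IsPendantCopy P r G φ := by
  simp [pendantCopies]

theorem IsPendantCopy.isPendantSet (h : IsPendantCopy P r G φ) :
    IsPendantSet G (Finset.univ.map φ) (φ r) where
  connected := by
    have e : G.comap φ ≃g G.induce ((Finset.univ.map φ : Finset α) : Set α) :=
      ⟨(Equiv.ofInjective φ φ.injective).trans (Equiv.setCongr (by simp)), Iff.rfl⟩
    exact e.connected_iff.1 (h.comap_eq ▸ h.connected)
  exists_isSoleExit := h.exists_isSoleExit

theorem IsPendantCopy.graph_root_unique {P' : SimpleGraph β} {r' : β}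
    (h : IsPendantCopy P r G φ) (h' : IsPendantCopy P' r' G φ) : P = P' ∧ r = r' := by
  refine ⟨h.comap_eq.symm.trans h'.comap_eq, φ.injective ?_⟩
  obtain ⟨b, hb⟩ := h.exists_isSoleExit
  obtain ⟨b', hb'⟩ := h'.exists_isSoleExit
  exact ((hb'.adj_iff _ hb.mem _ hb.notMem).1 ((hb.adj_iff _ hb.mem _ hb.notMem).2 ⟨rfl, rfl⟩)).1

theorem card_filter_univ_map_eq_le [Fintype α] (A : Finset α) :
    #{φ : β ↪ α | Finset.univ.map φ = A} ≤ (Fintype.card β).factorial := by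
  rcases Finset.eq_empty_or_nonempty {φ : β ↪ α | Finset.univ.map φ = A} with h | ⟨φ₀, hφ₀⟩
  · simp [h]
  rw [← Fintype.card_perm, ← Finset.card_univ]
  refine Finset.card_le_card_of_surjOn (fun σ => σ.toEmbedding.trans φ₀) fun φ hφ => ?_
  simp only [Finset.coe_filter, Finset.mem_filter, Finset.mem_univ, true_and,
    Set.mem_ofPred_eq] at hφ hφ₀
  have hrange (x : β) : ∃ y, φ₀ y = φ x := by
    have : φ x ∈ Finset.univ.map φ₀ := hφ₀ ▸ hφ ▸ by simp
    simpa using this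
  choose σ hσ using hrange
  have hinj : Function.Injective σ := fun x y hxy => φ.injective (by rw [← hσ, ← hσ, hxy])
  exact ⟨Equiv.ofBijective σ (Finite.injective_iff_bijective.1 hinj), by simp, by ext x; simp [hσ]⟩

theorem IsPendantCopy.card_le_of_forall_mem_map [Fintype α] (hG : G.Connected)
    (hcard : 2 * Fintype.card β < Fintype.card α) {s : Finset (β ↪ α)} {z : α}
    (hs : ∀ φ ∈ s, IsPendantCopy P r G φ ∧ z ∈ Finset.univ.map φ) :
    #s ≤ (Fintype.card β).factorial := by
  rcases s.eq_empty_or_nonempty with rfl | ⟨φ₀, hφ₀⟩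
  · simp
  refine (Finset.card_le_card fun φ hφ => ?_).trans
    (card_filter_univ_map_eq_le (Finset.univ.map φ₀))
  exact Finset.mem_filter.2 ⟨Finset.mem_univ _, (hs φ hφ).1.isPendantSet.eq_of_card_eq hG
    (hs φ₀ hφ₀).1.isPendantSet (by simpa [← two_mul] using hcard) (by simp) (hs φ hφ).2
    (hs φ₀ hφ₀).2⟩

theorem sum_card_pendantCopies_le [Fintype α] (s : Finset (SimpleGraph β)) (G : SimpleGraph α) :
    ∑ P ∈ s, ∑ r, #(pendantCopies P r G) ≤ (Fintype.card β).factorial *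
      #{A : Finset α | #A = Fintype.card β ∧ ∃ r, IsPendantSet G A r} := by
  rw [← Finset.sum_product', ← Finset.card_sigma]
  refine Finset.card_le_mul_card_image_of_maps_to (f := fun z => Finset.univ.map z.2)
    (fun z hz => ?_) _ (fun A _ => ?_)
  · have hz := mem_pendantCopies.1 (Finset.mem_sigma.1 hz).2
    simpa using ⟨_, hz.isPendantSet⟩
  · refine le_trans (Finset.card_le_card_of_injOn (fun z => z.2) (fun z hz => ?_)
      fun z hz z' hz' heq => ?_) (card_filter_univ_map_eq_le (β := β) A)
    · simpa using (Finset.mem_filter.1 hz).2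
    · obtain ⟨⟨P, r⟩, φ⟩ := z
      obtain ⟨⟨P', r'⟩, φ'⟩ := z'
      obtain rfl : φ = φ' := heq
      have hz := mem_pendantCopies.1 (Finset.mem_sigma.1 (Finset.mem_filter.1 hz).1).2
      have hz' := mem_pendantCopies.1 (Finset.mem_sigma.1 (Finset.mem_filter.1 hz').1).2
      obtain ⟨rfl, rfl⟩ := hz.graph_root_unique hz'
      rfl

theorem card_pendantCopies_le [Fintype α] (hG : G.Connected)
    (hcard : 2 * Fintype.card β < Fintype.card α) (P : SimpleGraph β) (r : β) :
    #(pendantCopies P r G) ≤ (Fintype.card β).factorial * Fintype.card α := by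
  calc #(pendantCopies P r G) ≤ ∑ r, #(pendantCopies P r G) :=
        Finset.single_le_sum (f := fun r => #(pendantCopies P r G))
          (fun _ _ => Nat.zero_le _) (Finset.mem_univ r)
    _ ≤ _ := by simpa using sum_card_pendantCopies_le {P} G
    _ ≤ _ := Nat.mul_le_mul_left _ <| (Finset.card_le_card fun A hA => by
        simp only [Finset.mem_filter, Finset.mem_univ, true_and] at hA ⊢
        exact ⟨hA.1.le, hA.2⟩).trans (card_filter_isPendantSet_le hG hcard)

theorem sum_inv_factorial_mul_sum_card_pendantCopies_le [Fintype α] (hG : G.Connected) {J : ℕ}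
    (hJ : 2 * J < Fintype.card α) (s : ∀ j, Finset (SimpleGraph (Fin j))) :
    ∑ j ∈ Finset.range (J + 1), (1 / j.factorial : ℝ) *
      ∑ V ∈ s j, ∑ v, (#(pendantCopies V v G) : ℝ) ≤ Fintype.card α := by
  have hsize (j : ℕ) : (1 / j.factorial : ℝ) * ∑ V ∈ s j, ∑ v, (#(pendantCopies V v G) : ℝ) ≤
      #{A : Finset α | #A = j ∧ ∃ r, IsPendantSet G A r} := by
    rw [one_div, inv_mul_le_iff₀ (by positivity)]
    simpa using Nat.cast_le (α := ℝ).2 (sum_card_pendantCopies_le (s j) G)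
  refine (Finset.sum_le_sum fun j _ => hsize j).trans ?_
  have hfiber := Finset.card_eq_sum_card_fiberwise (f := fun A : Finset α => #A)
    (s := {A : Finset α | #A ≤ J ∧ ∃ r, IsPendantSet G A r}) (t := Finset.range (J + 1))
    (fun A hA => by simpa [Nat.lt_succ_iff] using (by simpa using hA : _ ∧ _).1)
  have hle := card_filter_isPendantSet_le hG hJ
  rw [hfiber] at hle
  refine le_trans (Finset.sum_le_sum fun j hj => ?_) (Nat.cast_sum (R := ℝ) _ _ ▸ Nat.cast_le.2 hle)
  refine Nat.cast_le.2 (Finset.card_le_card fun A hA => ?_)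
  simp only [Finset.mem_filter, Finset.mem_univ, true_and, Finset.mem_range] at hA hj ⊢
  exact ⟨⟨by lia, hA.2⟩, hA.1⟩

end PendantCopies

section PendantCopiesBridgeJoin

open scoped Finset

variable {α α' β γ : Type*} {G : SimpleGraph α} {G' : SimpleGraph α'}

theorem isSoleExit_map_iff (e : G ≃g G') {A : Finset α} {r c : α} :
    IsSoleExit G' (A.map e.toEmbedding.toEmbedding) (e r) (e c) ↔ IsSoleExit G A r c := by
  have hmem (x : α) : e x ∈ A.map e.toEmbedding.toEmbedding ↔ x ∈ A :=
    Finset.mem_map' _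
  constructor
  · rintro ⟨hr, hc, h⟩
    refine ⟨(hmem r).1 hr, (hmem c).not.1 hc, fun x hx z hz => ?_⟩
    simpa [e.map_adj_iff] using h (e x) ((hmem x).2 hx) (e z) ((hmem z).not.2 hz)
  · rintro ⟨hr, hc, h⟩
    refine ⟨(hmem r).2 hr, (hmem c).not.2 hc, fun x hx z hz => ?_⟩
    obtain ⟨x, rfl⟩ := e.surjective x
    obtain ⟨z, rfl⟩ := e.surjective z
    simpa [e.map_adj_iff] using h x ((hmem x).1 hx) z ((hmem z).not.1 hz)

variable [Fintype γ] {P : SimpleGraph γ} {r : γ}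

theorem IsPendantCopy.map_iso {φ : γ ↪ α} (h : IsPendantCopy P r G φ) (e : G ≃g G') :
    IsPendantCopy P r G' (φ.trans e.toEmbedding.toEmbedding) where
  connected := h.connected
  comap_eq := by
    rw [← h.comap_eq]
    ext x y
    exact e.map_adj_iff
  exists_isSoleExit := by
    obtain ⟨c, hc⟩ := h.exists_isSoleExit
    exact ⟨e c, Finset.map_map _ _ _ ▸ (isSoleExit_map_iff e).2 hc⟩

theorem card_pendantCopies_le_of_iso [Fintype α] [Fintype α'] (e : G ≃g G') :
    #(pendantCopies P r G) ≤ #(pendantCopies P r G') :=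
  Finset.card_le_card_of_injOn (fun φ => φ.trans e.toEmbedding.toEmbedding)
    (fun _ hφ => mem_pendantCopies.2 ((mem_pendantCopies.1 hφ).map_iso e))
    fun φ _ ψ _ h => by
      ext x
      exact e.injective (DFunLike.congr_fun h x)

theorem card_pendantCopies_eq_of_iso [Fintype α] [Fintype α'] (e : G ≃g G') :
    #(pendantCopies P r G) = #(pendantCopies P r G') :=
  (card_pendantCopies_le_of_iso e).antisymm (card_pendantCopies_le_of_iso e.symm)

variable {U : SimpleGraph α} {V : SimpleGraph β} {a : α} {b : β}

theorem isSoleExit_bridgeJoin_inl_iff {A : Finset α} (ha : a ∉ A) {r : α} {z : α ⊕ β} :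
    IsSoleExit (bridgeJoin U V a b) (A.map .inl) (.inl r) z ↔
      ∃ c, z = .inl c ∧ IsSoleExit U A r c := by
  constructor
  · rintro ⟨hr, hz, h⟩
    have hr : r ∈ A := by simpa using hr
    cases z with
    | inl c => exact ⟨c, rfl, hr, by simpa using hz, fun x hx y hy => by
        simpa using h (.inl x) (by simpa using hx) (.inl y) (by simpa using hy)⟩
    | inr c =>
      have hra := (h _ (by simpa using hr) _ hz).2 ⟨rfl, rfl⟩
      exact absurd ((bridgeJoin_adj_inl_inr.1 hra).1 ▸ hr) ha
  · rintro ⟨c, rfl, hr, hc, h⟩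
    refine ⟨by simpa using hr, by simpa using hc, ?_⟩
    intro x' hx' z hz
    obtain ⟨x, hx, rfl⟩ := Finset.mem_map.1 hx'
    have hxa : x ≠ a := fun hxa => ha (hxa ▸ hx)
    cases z with
    | inl z => simpa using h x hx z (by simpa using hz)
    | inr z => simp [hxa]

theorem isPendantCopy_bridgeJoin_inl_iff {φ : γ ↪ α} (ha : a ∉ Finset.univ.map φ) :
    IsPendantCopy P r (bridgeJoin U V a b) (φ.trans .inl) ↔ IsPendantCopy P r U φ := by
  have hcomap : (bridgeJoin U V a b).comap (φ.trans .inl) = U.comap φ := by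
    ext x y
    simp
  have hexit : (∃ z, IsSoleExit (bridgeJoin U V a b) (Finset.univ.map (φ.trans .inl))
      (.inl (φ r)) z) ↔ ∃ c, IsSoleExit U (Finset.univ.map φ) (φ r) c := by
    simp_rw [← Finset.map_map, isSoleExit_bridgeJoin_inl_iff ha]
    simp
  exact ⟨fun h => ⟨h.connected, hcomap ▸ h.comap_eq, hexit.1 h.exists_isSoleExit⟩,
    fun h => ⟨h.connected, hcomap ▸ h.comap_eq, hexit.2 h.exists_isSoleExit⟩⟩

theorem card_pendantCopies_le_card_pendantCopies_bridgeJoin_add [Fintype α] [Fintype β]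
    (hU : U.Connected) (hcard : 2 * Fintype.card γ < Fintype.card α) :
    #(pendantCopies P r U) ≤
      #(pendantCopies P r (bridgeJoin U V a b)) + (Fintype.card γ).factorial := by
  have hthrough : #{φ ∈ pendantCopies P r U | a ∈ Finset.univ.map φ} ≤
      (Fintype.card γ).factorial :=
    IsPendantCopy.card_le_of_forall_mem_map hU hcard (by simpa using fun φ h x hx => ⟨h, x, hx⟩)
  have havoid : #{φ ∈ pendantCopies P r U | a ∉ Finset.univ.map φ} ≤
      #(pendantCopies P r (bridgeJoin U V a b)) := by
    refine Finset.card_le_card_of_injOn (fun φ => φ.trans .inl) (fun φ hφ => ?_)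
      fun φ _ ψ _ h => ?_
    · obtain ⟨hφ, ha⟩ := Finset.mem_filter.1 hφ
      exact mem_pendantCopies.2
        ((isPendantCopy_bridgeJoin_inl_iff ha).2 (mem_pendantCopies.1 hφ))
    · ext x
      exact Sum.inl_injective (DFunLike.congr_fun h x)
  have hsplit := Finset.card_filter_add_card_filter_not (s := pendantCopies P r U)
    (fun φ => a ∈ Finset.univ.map φ)
  lia

theorem exists_trans_inl_eq {ψ : γ ↪ α ⊕ β} (h : ∀ y, Sum.inr y ∉ Finset.univ.map ψ) :
    ∃ φ : γ ↪ α, φ.trans .inl = ψ := by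
  have hinl (x : γ) : ∃ y, Sum.inl y = ψ x := by
    cases hx : ψ x with
    | inl y => exact ⟨y, rfl⟩
    | inr y => exact absurd (Finset.mem_map.2 ⟨x, Finset.mem_univ _, hx⟩) (h y)
  choose f hf using hinl
  exact ⟨⟨f, fun x y hxy => ψ.injective (by rw [← hf, ← hf, hxy])⟩, DFunLike.ext _ _ hf⟩

theorem card_pendantCopies_bridgeJoin_le [Fintype α] [Fintype β] (hU : U.Connected)
    (hV : V.Connected) (hcard : 2 * Fintype.card γ < Fintype.card α) :
    #(pendantCopies P r (bridgeJoin U V a b)) ≤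
      #(pendantCopies P r U) + (Fintype.card β + 1) * (Fintype.card γ).factorial := by
  set J := bridgeJoin U V a b
  have hthrough (z : α ⊕ β) : #{ψ ∈ pendantCopies P r J | z ∈ Finset.univ.map ψ} ≤
      (Fintype.card γ).factorial :=
    IsPendantCopy.card_le_of_forall_mem_map (bridgeJoin_connected hU hV)
      (hcard.trans_le (by simp)) (by simpa using fun φ h x hx => ⟨h, x, hx⟩)
  let T : Finset (α ⊕ β) := insert (.inl a) (Finset.univ.map .inr)
  have hT : #T = Fintype.card β + 1 := by simp [T]
  have hsub : pendantCopies P r J ⊆ (pendantCopies P r U).image (fun φ => φ.trans .inl) ∪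
      T.biUnion fun z => {ψ ∈ pendantCopies P r J | z ∈ Finset.univ.map ψ} := by
    intro ψ hψ
    by_cases hmeet : ∃ z ∈ T, z ∈ Finset.univ.map ψ
    · obtain ⟨z, hz, hzψ⟩ := hmeet
      exact Finset.mem_union_right _
        (Finset.mem_biUnion.2 ⟨z, hz, Finset.mem_filter.2 ⟨hψ, hzψ⟩⟩)
    · push Not at hmeet
      obtain ⟨φ, rfl⟩ := exists_trans_inl_eq fun y => hmeet (.inr y) (by simp [T])
      have ha : a ∉ Finset.univ.map φ := by simpa using hmeet (.inl a) (by simp [T])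
      exact Finset.mem_union_left _ (Finset.mem_image_of_mem _ (mem_pendantCopies.2
        ((isPendantCopy_bridgeJoin_inl_iff ha).1 (mem_pendantCopies.1 hψ))))
  have hbiUnion := Finset.card_biUnion_le_card_mul T _ _ fun z _ => hthrough z
  rw [hT] at hbiUnion
  have hunion := (Finset.card_le_card hsub).trans (Finset.card_union_le _ _)
  have himage := Finset.card_image_le (s := pendantCopies P r U)
    (f := fun φ : γ ↪ α => φ.trans (.inl : α ↪ α ⊕ β))
  lia

end PendantCopiesBridgeJoin

section Attachment

open scoped Finset

theorem sum_le_sum_of_injOn {ι κ : Type*} {s : Finset ι} {t : Finset κ} {f : ι → ℝ} {g : κ → ℝ}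
    (e : ι → κ) (hmaps : Set.MapsTo e s t) (hinj : Set.InjOn e s) (hle : ∀ i ∈ s, f i ≤ g (e i))
    (hg : ∀ k ∈ t, 0 ≤ g k) : ∑ i ∈ s, f i ≤ ∑ k ∈ t, g k :=
  calc ∑ i ∈ s, f i ≤ ∑ i ∈ s, g (e i) := Finset.sum_le_sum hle
    _ = ∑ k ∈ s.image e, g k := (Finset.sum_image hinj).symm
    _ ≤ ∑ k ∈ t, g k := Finset.sum_le_sum_of_subset_of_nonneg
        (Finset.image_subset_iff.2 hmaps) fun k hk _ => hg k hk

/-- A graph with a distinguished root vertex, on an initial segment of the natural numbers. -/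
abbrev RootedGraph :=
  Σ j : ℕ, SimpleGraph (Fin j) × Fin j

/-- `Attaches V x y` says that the rooted graph `y` arises from `x` by joining a copy of `V` to it
with an edge. Here `none` stands for the empty rooted graph: attaching `V` to it produces `V`
itself, with an arbitrary root. -/
inductive Attaches {j : ℕ} (V : SimpleGraph (Fin j)) :
    Option RootedGraph → Option RootedGraph → Prop
  | root (v : Fin j) : Attaches V none (some ⟨j, V, v⟩)
  | join {i w : ℕ} {U : SimpleGraph (Fin i)} {W : SimpleGraph (Fin w)} {u : Fin i} {v : Fin j}
      (e : bridgeJoin U V u v ≃g W) (r : Fin i) :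
      Attaches V (some ⟨i, U, r⟩) (some ⟨w, W, e (.inl r)⟩)

/-- The number of pendant copies of a rooted graph in `G`. The empty rooted graph has a copy at
every vertex. -/
def copyCount {n : ℕ} (G : SimpleGraph (Fin n)) : Option RootedGraph → ℕ
  | none => n
  | some R => #(pendantCopies R.2.1 R.2.2 G)

theorem isPendantCopy_inr_bridgeJoin {α β : Type*} [Fintype β] (U : SimpleGraph α)
    {V : SimpleGraph β} (hV : V.Connected) (a : α) (b : β) :
    IsPendantCopy V b (bridgeJoin U V a b) .inr where
  connected := hV
  comap_eq := by
    ext x y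
    exact bridgeJoin_adj_inr_inr
  exists_isSoleExit := by
    refine ⟨.inl a, by simp, by simp, fun x hx z hz => ?_⟩
    obtain ⟨x, -, rfl⟩ := Finset.mem_map.1 hx
    cases z with
    | inl z => simp [and_comm]
    | inr z => simp at hz

theorem IsPendantCopy.sumMap_bridgeJoin {α β γ : Type*} [Fintype β] [Fintype γ]
    {B : SimpleGraph α} {V : SimpleGraph β} {U : SimpleGraph γ} {r : γ} {φ : γ ↪ α}
    (h : IsPendantCopy U r B φ) (hV : V.Connected) (u : γ) (v : β) :
    IsPendantCopy (bridgeJoin U V u v) (.inl r) (bridgeJoin B V (φ u) v)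
      (φ.sumMap (.refl β)) where
  connected := bridgeJoin_connected h.connected hV
  comap_eq := by
    rw [← h.comap_eq]
    ext (x | x) (y | y) <;> simp
  exists_isSoleExit := by
    obtain ⟨b, -, hb, hadj⟩ := h.exists_isSoleExit
    refine ⟨.inl b, by simp, by simpa using hb, fun x hx z hz => ?_⟩
    obtain ⟨x, -, rfl⟩ := Finset.mem_map.1 hx
    rcases z with z | z
    · have hz : z ∉ Finset.univ.map φ := by simpa using hz
      cases x with
      | inl x => simpa using hadj (φ x) (by simp) z hz
      | inr x => simpa using fun (hzu : z = φ u) => absurd (by simp [hzu]) hz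
    · simp at hz

theorem IsPendantCopy.comp_iso {α γ γ' : Type*} [Fintype γ] [Fintype γ'] {G : SimpleGraph α}
    {P : SimpleGraph γ} {P' : SimpleGraph γ'} {r : γ} {φ : γ ↪ α} (h : IsPendantCopy P r G φ)
    (e : P ≃g P') : IsPendantCopy P' (e r) G (e.symm.toEmbedding.toEmbedding.trans φ) where
  connected := e.connected_iff.1 h.connected
  comap_eq := by
    ext x y
    obtain rfl := h.comap_eq
    exact e.symm.map_adj_iff
  exists_isSoleExit := by
    obtain ⟨b, hb⟩ := h.exists_isSoleExit
    have hmap : Finset.univ.map (e.symm.toEmbedding.toEmbedding.trans φ) = Finset.univ.map φ := by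
      ext x
      simp [e.symm.surjective.exists]
    exact ⟨b, by simpa [hmap] using hb⟩

theorem bridgeJoin_inj {α β : Type*} {U U' : SimpleGraph α} {V V' : SimpleGraph β} {a a' : α}
    {b b' : β} (h : bridgeJoin U V a b = bridgeJoin U' V' a' b') :
    (U = U' ∧ a = a') ∧ V = V' ∧ b = b' := by
  have hbridge : a = a' ∧ b = b' := by
    rw [← bridgeJoin_adj_inl_inr (U := U') (V := V'), ← h]
    simp
  refine ⟨⟨?_, hbridge.1⟩, ?_, hbridge.2⟩ <;> ext x y
  · rw [← bridgeJoin_adj_inl_inl (V := V) (a := a) (b := b), h, bridgeJoin_adj_inl_inl]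
  · rw [← bridgeJoin_adj_inr_inr (U := U) (a := a) (b := b), h, bridgeJoin_adj_inr_inr]

theorem exists_equiv_forall_apply_inr_eq {α β γ : Type*} [Fintype α] [Fintype β] [Fintype γ]
    (hcard : Fintype.card α + Fintype.card β = Fintype.card γ) (ψ : β ↪ γ) :
    ∃ E : α ⊕ β ≃ γ, ∀ y, E (.inr y) = ψ y := by
  have hα : Fintype.card α = Fintype.card ((Set.range ψ)ᶜ : Set γ) := by
    rw [Fintype.card_compl_set, Set.card_range_of_injective ψ.injective]
    lia
  exact ⟨(Equiv.sumCongr (Fintype.equivOfCardEq hα) (Equiv.ofInjective ψ ψ.injective)).trans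
    ((Equiv.sumComm _ _).trans (Equiv.Set.sumCompl _)), fun y => rfl⟩

namespace GraphClassOn

variable {C : GraphClassOn} {m j : ℕ}

theorem mem_connectedGraphs_of_bridgeJoin_iso (hI : ClassIsoInvariant C) (hA : ClassAddable C)
    {n : ℕ} {B : SimpleGraph (Fin m)} (hB : B ∈ C.connectedGraphs m) {V : SimpleGraph (Fin j)}
    (hV : V ∈ C.connectedGraphs j) {a : Fin m} {v : Fin j} {G : SimpleGraph (Fin n)}
    (e : bridgeJoin B V a v ≃g G) : G ∈ C.connectedGraphs n := by
  rw [mem_connectedGraphs] at hB hV ⊢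
  exact ⟨(hI _ _ _ _ ⟨e⟩).1 (hA.bridgeJoin_mem hI hB.1 hV.1 a v),
    e.connected_iff.1 (bridgeJoin_connected hB.2 hV.2)⟩

variable {V : SimpleGraph (Fin j)} {F : SimpleGraph (Fin m) → ℝ}
  {F' : SimpleGraph (Fin (m + j)) → ℝ}

theorem descFactorial_mul_sum_card_mul_le (hI : ClassIsoInvariant C) (hA : ClassAddable C)
    (hV : V ∈ C.connectedGraphs j) (v : Fin j) (hF' : ∀ G, 0 ≤ F' G)
    (hF : ∀ B ∈ C.connectedGraphs m, ∀ G a, Nonempty (bridgeJoin B V a v ≃g G) → F B ≤ F' G)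
    {σ : Type*} (S : SimpleGraph (Fin m) → Finset σ) (a : σ → Fin m) {w : ℕ}
    {W : SimpleGraph (Fin w)} {r : Fin w} (φ : σ → Fin w ↪ Fin m ⊕ Fin j)
    (hφ : ∀ B, ∀ s ∈ S B, IsPendantCopy W r (bridgeJoin B V (a s) v) (φ s))
    (hinj : Function.Injective fun s => (a s, φ s)) (ι : Fin j → Fin w)
    (hι : ∀ s y, φ s (ι y) = .inr y) :
    ((m + j).descFactorial j : ℝ) * ∑ B ∈ C.connectedGraphs m, (#(S B) : ℝ) * F B ≤
      ∑ G ∈ C.connectedGraphs (m + j), (#(pendantCopies W r G) : ℝ) * F' G := by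
  choose E hE using exists_equiv_forall_apply_inr_eq (α := Fin m) (β := Fin j) (γ := Fin (m + j))
    (by simp)
  let G (p : (Fin j ↪ Fin (m + j)) × Σ _ : SimpleGraph (Fin m), σ) : SimpleGraph (Fin (m + j)) :=
    (bridgeJoin p.2.1 V (a p.2.2) v).map (E p.1)
  let iso p : bridgeJoin p.2.1 V (a p.2.2) v ≃g G p := SimpleGraph.Iso.map (E p.1) _
  calc ((m + j).descFactorial j : ℝ) * ∑ B ∈ C.connectedGraphs m, (#(S B) : ℝ) * F B
      = ∑ p ∈ (Finset.univ : Finset (Fin j ↪ Fin (m + j))) ×ˢ (C.connectedGraphs m).sigma S,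
          F p.2.1 := by
        simp [Finset.sum_product, Finset.sum_sigma, Fintype.card_embedding_eq]
    _ ≤ ∑ q ∈ (C.connectedGraphs (m + j)).sigma fun G => pendantCopies W r G, F' q.1 := by
        refine sum_le_sum_of_injOn (fun p => ⟨G p, (φ p.2.2).trans (E p.1).toEmbedding⟩)
          (fun p hp => ?_) ?_ (fun p hp => ?_) fun q _ => hF' q.1
        · obtain ⟨hB, hs⟩ := Finset.mem_sigma.1 (Finset.mem_product.1 hp).2
          exact Finset.mem_sigma.2 ⟨mem_connectedGraphs_of_bridgeJoin_iso hI hA hB hV (iso p),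
            mem_pendantCopies.2 ((hφ _ _ hs).map_iso (iso p))⟩
        · rintro ⟨ψ, B, s⟩ - ⟨ψ', B', s'⟩ - heq
          obtain ⟨hG, hcopy⟩ := Sigma.mk.inj_iff.1 heq
          have hcopy := DFunLike.congr_fun (eq_of_heq hcopy)
          obtain rfl : ψ = ψ' := by
            ext y
            simpa [hι, hE] using congrArg Fin.val (hcopy (ι y))
          obtain ⟨⟨rfl, ha⟩, -⟩ := bridgeJoin_inj
            (SimpleGraph.map_injective (E ψ).toEmbedding hG)
          obtain rfl : s = s' := hinj <| Prod.ext ha <| DFunLike.ext _ _ fun x =>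
            (E ψ).injective (hcopy x)
          rfl
        · exact hF _ (Finset.mem_sigma.1 (Finset.mem_product.1 hp).2).1 _ _ ⟨iso p⟩
    _ = _ := by simp [Finset.sum_sigma]

theorem descFactorial_mul_sum_copyCount_mul_le (hI : ClassIsoInvariant C) (hA : ClassAddable C)
    (hV : V ∈ C.connectedGraphs j) {x y : Option RootedGraph} (hxy : Attaches V x y)
    (hF' : ∀ G, 0 ≤ F' G)
    (hF : ∀ B ∈ C.connectedGraphs m, ∀ G a v, Nonempty (bridgeJoin B V a v ≃g G) → F B ≤ F' G) :
    ((m + j).descFactorial j : ℝ) * ∑ B ∈ C.connectedGraphs m, (copyCount B x : ℝ) * F B ≤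
      ∑ G ∈ C.connectedGraphs (m + j), (copyCount G y : ℝ) * F' G := by
  have hV' := (mem_connectedGraphs.1 hV).2
  cases hxy with
  | root v =>
    simpa [copyCount] using descFactorial_mul_sum_card_mul_le hI hA hV v hF'
      (fun B hB G a => hF B hB G a v) (fun _ => Finset.univ) id (fun _ => .inr)
      (fun B a _ => isPendantCopy_inr_bridgeJoin B hV' a v) (fun a b h => (Prod.ext_iff.1 h).1)
      id fun _ _ => rfl
  | @join i w U W u v e r =>
    refine descFactorial_mul_sum_card_mul_le hI hA hV v hF' (fun B hB G a => hF B hB G a v)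
      (fun B => pendantCopies U r B) (fun φ => φ u)
      (fun φ => e.symm.toEmbedding.toEmbedding.trans (φ.sumMap (.refl _)))
      (fun B φ hφ => ((mem_pendantCopies.1 hφ).sumMap_bridgeJoin hV' u v).comp_iso e)
      (fun φ φ' h => ?_) (fun y => e (.inr y)) (fun φ y => by simp)
    ext x
    simpa [Fin.ext_iff] using DFunLike.congr_fun (Prod.ext_iff.1 h).2 (e (.inl x))

theorem bot_mem_connectedGraphs_one (h : C (Fin 1) ⊥) : ⊥ ∈ C.connectedGraphs 1 :=
  mem_connectedGraphs.2 ⟨h, .of_subsingleton⟩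

theorem connectedGraphs_nonempty (hI : ClassIsoInvariant C) (hA : ClassAddable C)
    (h : C (Fin 1) ⊥) (n : ℕ) : (C.connectedGraphs (n + 1)).Nonempty := by
  have h1 := bot_mem_connectedGraphs_one h
  induction n with
  | zero => exact ⟨⊥, h1⟩
  | succ n ih =>
    obtain ⟨B, hB⟩ := ih
    exact ⟨_, mem_connectedGraphs_of_bridgeJoin_iso hI hA hB h1
      (SimpleGraph.Iso.map finSumFinEquiv (bridgeJoin B ⊥ 0 0))⟩

end GraphClassOn

end Attachment

section ConvolutionInequalities

open Finset (range)
open Finset.HasAntidiagonal (antidiagonal mem_antidiagonal)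

theorem sum_mul_pow_le_sum_mul_pow_mul_sum_mul_pow {a b d : ℕ → ℝ} (ha : ∀ n, 0 ≤ a n)
    (hd : ∀ n, 0 ≤ d n) (hb : ∀ n, b n ≤ ∑ p ∈ antidiagonal n, d p.1 * a p.2) {q : ℝ} (hq : 0 ≤ q)
    (N : ℕ) :
    ∑ n ∈ range N, b n * q ^ n ≤ (∑ n ∈ range N, d n * q ^ n) * ∑ n ∈ range N, a n * q ^ n :=
  calc ∑ n ∈ range N, b n * q ^ n
      ≤ ∑ n ∈ range N, ∑ p ∈ antidiagonal n, d p.1 * q ^ p.1 * (a p.2 * q ^ p.2) := by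
        refine Finset.sum_le_sum fun n _ => ?_
        refine (mul_le_mul_of_nonneg_right (hb n) (pow_nonneg hq n)).trans_eq ?_
        rw [Finset.sum_mul]
        refine Finset.sum_congr rfl fun p hp => ?_
        rw [← mem_antidiagonal.1 hp]
        ring
    _ ≤ ∑ p ∈ range N ×ˢ range N, d p.1 * q ^ p.1 * (a p.2 * q ^ p.2) := by
        rw [Finset.sum_sigma']
        refine sum_le_sum_of_injOn Sigma.snd ?_ ?_ (fun _ _ => le_rfl) fun p _ =>
          mul_nonneg (mul_nonneg (hd _) (pow_nonneg hq _)) (mul_nonneg (ha _) (pow_nonneg hq _))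
        · rintro ⟨n, p⟩ hp
          simp only [Finset.coe_sigma, Set.mem_sigma_iff, Finset.mem_coe, Finset.mem_range,
            mem_antidiagonal, Finset.mem_product] at hp ⊢
          lia
        · rintro ⟨n, p⟩ hp ⟨n', p'⟩ hp' (rfl : p = p')
          simp only [Finset.coe_sigma, Set.mem_sigma_iff, Finset.mem_coe, mem_antidiagonal]
            at hp hp'
          obtain rfl : n = n' := hp.2.symm.trans hp'.2
          rfl
    _ = _ := by rw [Finset.sum_product, Finset.sum_mul_sum]

theorem le_mul_exp_sub_of_deriv_le {f f' k k' : ℝ → ℝ} (hf : ∀ x, HasDerivAt f (f' x) x)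
    (hk : ∀ x, HasDerivAt k (k' x) x) {a b : ℝ} (hab : a ≤ b)
    (hle : ∀ x ∈ Set.Ioo a b, f' x ≤ k' x * f x) : f b ≤ f a * Real.exp (k b - k a) := by
  have hderiv (x : ℝ) : HasDerivAt (fun y => f y * Real.exp (-k y))
      ((f' x - k' x * f x) * Real.exp (-k x)) x :=
    ((hf x).mul (hk x).fun_neg.exp).congr_deriv (by ring)
  have hanti : AntitoneOn (fun y => f y * Real.exp (-k y)) (Set.Icc a b) := by
    refine antitoneOn_of_deriv_nonpos (convex_Icc a b)
      (fun x _ => (hderiv x).continuousAt.continuousWithinAt)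
      (fun x _ => (hderiv x).differentiableAt.differentiableWithinAt) fun x hx => ?_
    rw [interior_Icc] at hx
    rw [(hderiv x).deriv]
    exact mul_nonpos_of_nonpos_of_nonneg (sub_nonpos.2 (hle x hx)) (Real.exp_pos _).le
  calc f b = f b * Real.exp (-k b) * Real.exp (k b) := by
        rw [mul_assoc, ← Real.exp_add, neg_add_cancel, Real.exp_zero, mul_one]
    _ ≤ f a * Real.exp (-k a) * Real.exp (k b) := by
        refine mul_le_mul_of_nonneg_right ?_ (Real.exp_pos _).le
        exact hanti (Set.left_mem_Icc.2 hab) (Set.right_mem_Icc.2 hab) hab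
    _ = f a * Real.exp (k b - k a) := by
        rw [mul_assoc, ← Real.exp_add]
        ring_nf

theorem hasDerivAt_sum_mul_pow (a : ℕ → ℝ) (N : ℕ) (x : ℝ) :
    HasDerivAt (fun y => ∑ n ∈ range N, a n * y ^ n)
      (∑ n ∈ range N, a n * (n * x ^ (n - 1))) x :=
  HasDerivAt.fun_sum fun n _ => (hasDerivAt_pow n x).const_mul (a n)

theorem sum_mul_deriv_pow_mul (a : ℕ → ℝ) (N : ℕ) (x : ℝ) :
    (∑ n ∈ range N, a n * (n * x ^ (n - 1))) * x = ∑ n ∈ range N, n * a n * x ^ n := by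
  rw [Finset.sum_mul]
  refine Finset.sum_congr rfl fun n _ => ?_
  cases n with
  | zero => simp
  | succ n =>
    rw [Nat.add_sub_cancel]
    ring

-- The hypothesis says `q a'(q) ≤ q k'(q) a(q)` for the generating functions, so `a ≤ exp k`.
theorem sum_range_le_exp_sum_range {a k : ℕ → ℝ} (ha : ∀ n, 0 ≤ a n) (hk : ∀ n, 0 ≤ k n)
    (ha₀ : a 0 ≤ 1) (hrec : ∀ n : ℕ, n * a n ≤ ∑ p ∈ antidiagonal n, p.1 * k p.1 * a p.2)
    (N : ℕ) : ∑ n ∈ range (N + 1), a n ≤ Real.exp (∑ n ∈ range (N + 1), k n) := by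
  have hle (q : ℝ) (hq : q ∈ Set.Ioo (0 : ℝ) 1) :
      ∑ n ∈ range (N + 1), a n * (n * q ^ (n - 1)) ≤
        (∑ n ∈ range (N + 1), k n * (n * q ^ (n - 1))) * ∑ n ∈ range (N + 1), a n * q ^ n := by
    refine le_of_mul_le_mul_right ?_ hq.1
    rw [mul_right_comm, sum_mul_deriv_pow_mul, sum_mul_deriv_pow_mul]
    exact sum_mul_pow_le_sum_mul_pow_mul_sum_mul_pow ha
      (fun n => mul_nonneg n.cast_nonneg (hk n)) hrec hq.1.le (N + 1)
  have hexp := le_mul_exp_sub_of_deriv_le (hasDerivAt_sum_mul_pow a (N + 1))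
    (hasDerivAt_sum_mul_pow k (N + 1)) zero_le_one hle
  simp only [one_pow, mul_one, zero_pow_eq, mul_ite, mul_zero, Finset.sum_ite_eq',
    Finset.mem_range, Nat.succ_pos, if_true] at hexp
  calc ∑ n ∈ range (N + 1), a n
      ≤ a 0 * Real.exp (∑ n ∈ range (N + 1), k n - k 0) := hexp
    _ ≤ 1 * Real.exp (∑ n ∈ range (N + 1), k n) := by
        gcongr
        linarith [hk 0]
    _ = _ := one_mul _

-- Summing the second hypothesis gives `∑ k ≤ T - T² / 2` with `T = ∑ n * k n`.
theorem sum_range_le_half_of_sum_antidiagonal_le {k : ℕ → ℝ} (hk : ∀ n, 0 ≤ k n) (hk₀ : k 0 = 0)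
    (hsum : ∀ N, ∑ n ∈ range (N + 1), n * k n ≤ 1)
    (hanti : ∀ n : ℕ, ∑ p ∈ antidiagonal n, p.1 * k p.1 * (p.2 * k p.2) ≤ 2 * (n - 1) * k n)
    (N : ℕ) : ∑ n ∈ range N, k n ≤ 1 / 2 := by
  set T : ℕ → ℝ := fun n => n * k n
  have hT (n : ℕ) : 0 ≤ T n := mul_nonneg n.cast_nonneg (hk n)
  have hTsum : Summable T := summable_of_sum_range_le hT fun N =>
    (Finset.sum_le_sum_of_subset_of_nonneg (Finset.range_mono N.le_succ) fun n _ _ => hT n).trans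
      (hsum N)
  have hnorm : Summable fun n => ‖T n‖ := hTsum.norm
  have hconv : Summable fun n => ∑ p ∈ antidiagonal n, T p.1 * T p.2 :=
    (summable_norm_sum_mul_antidiagonal_of_summable_norm hnorm hnorm).of_norm
  have hle (n : ℕ) : k n ≤ T n - 1 / 2 * ∑ p ∈ antidiagonal n, T p.1 * T p.2 := by
    linarith [hanti n]
  have hksum : Summable k := by
    refine Summable.of_nonneg_of_le hk (fun n => ?_) hTsum
    rcases n.eq_zero_or_pos with rfl | hn
    · exact hk₀.trans_le (hT 0)
    · exact le_mul_of_one_le_left (hk n) (by exact_mod_cast hn)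
  calc ∑ n ∈ range N, k n
      ≤ ∑' n, k n := hksum.sum_le_tsum _ fun n _ => hk n
    _ ≤ ∑' n, (T n - 1 / 2 * ∑ p ∈ antidiagonal n, T p.1 * T p.2) :=
        hksum.tsum_le_tsum hle (hTsum.sub (hconv.mul_left _))
    _ = ∑' n, T n - 1 / 2 * ((∑' n, T n) * ∑' n, T n) := by
        rw [hTsum.tsum_sub (hconv.mul_left _), tsum_mul_left,
          tsum_mul_tsum_eq_tsum_sum_antidiagonal_of_summable_norm hnorm hnorm]
    _ ≤ 1 / 2 := by linarith [sq_nonneg (1 - ∑' n, T n)]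

end ConvolutionInequalities

section Multipliers

open scoped Finset
open Finset (range)
open Finset.HasAntidiagonal (antidiagonal mem_antidiagonal)

theorem Attaches.exists_of_bridgeJoin {j₁ j₂ j : ℕ} {V₁ : SimpleGraph (Fin j₁)}
    {V₂ : SimpleGraph (Fin j₂)} {V : SimpleGraph (Fin j)} {a : Fin j₁} {b : Fin j₂}
    (f : bridgeJoin V₁ V₂ a b ≃g V) {x y : Option RootedGraph} (h : Attaches V x y) :
    ∃ z, Attaches V₁ x z ∧ Attaches V₂ z y ∨ Attaches V₂ x z ∧ Attaches V₁ z y := by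
  have hroot {j₁ j₂ : ℕ} {V₁ : SimpleGraph (Fin j₁)} {V₂ : SimpleGraph (Fin j₂)} {a b}
      (f : bridgeJoin V₁ V₂ a b ≃g V) (t : Fin j₁) :
      ∃ z, Attaches V₁ none z ∧ Attaches V₂ z (some ⟨j, V, f (.inl t)⟩) :=
    ⟨_, .root t, .join f t⟩
  have hjoin {j₁ j₂ i w : ℕ} {V₁ : SimpleGraph (Fin j₁)} {V₂ : SimpleGraph (Fin j₂)} {a b}
      (f : bridgeJoin V₁ V₂ a b ≃g V) {U : SimpleGraph (Fin i)} {W : SimpleGraph (Fin w)} {u}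
      (t : Fin j₁) (e : bridgeJoin U V u (f (.inl t)) ≃g W) (r : Fin i) :
      ∃ z, Attaches V₁ (some ⟨i, U, r⟩) z ∧ Attaches V₂ z (some ⟨w, W, e (.inl r)⟩) := by
    let e₁ := SimpleGraph.Iso.map finSumFinEquiv (bridgeJoin U V₁ u t)
    let g₁ := bridgeJoinCongr e₁ (.refl (G := V₂)) (.inr a) b
    let g₂ := (bridgeJoinAssoc U V₁ V₂ u t a b).trans
      ((bridgeJoinCongr .refl f u (.inl t)).trans e)
    have hr : (g₁.symm.trans g₂) (.inl (e₁ (.inl r))) = e (.inl r) :=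
      congrArg g₂ (g₁.symm_apply_apply (.inl (.inl r)))
    exact ⟨_, .join e₁ r, hr ▸ .join (g₁.symm.trans g₂) (e₁ (.inl r))⟩
  let f' : bridgeJoin V₂ V₁ b a ≃g V := (bridgeJoinComm V₂ V₁ b a).trans f
  cases h with
  | root v =>
    obtain ⟨t | t, rfl⟩ := f.surjective v
    · exact (hroot f t).imp fun _ => .inl
    · exact (hroot f' t).imp fun _ => .inr
  | @join i w U W u v e r =>
    obtain ⟨t | t, rfl⟩ := f.surjective v
    · exact (hjoin f t e r).imp fun _ => .inl
    · exact (hjoin f' t e r).imp fun _ => .inr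

variable {ξ : Option RootedGraph → ℝ} {j : ℕ} {V : SimpleGraph (Fin j)}

/-- Attaching `V` decreases the weight `ξ` at most by the factor `c`. -/
def IsMultiplier (ξ : Option RootedGraph → ℝ) {j : ℕ} (V : SimpleGraph (Fin j)) (c : ℝ) : Prop :=
  0 ≤ c ∧ ∀ ⦃x y⦄, Attaches V x y → c * ξ x ≤ ξ y

/-- The largest factor by which attaching `V` is guaranteed to multiply the weight `ξ`. -/
def bestMultiplier (ξ : Option RootedGraph → ℝ) {j : ℕ} (V : SimpleGraph (Fin j)) : ℝ :=
  sSup {c | IsMultiplier ξ V c}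

theorem isMultiplier_zero (hξ : ∀ x, 0 ≤ ξ x) (V : SimpleGraph (Fin j)) : IsMultiplier ξ V 0 :=
  ⟨le_rfl, fun x y _ => by simpa using hξ y⟩

theorem IsMultiplier.le_apply_some (hξ₁ : ξ none = 1) {c : ℝ} (hc : IsMultiplier ξ V c)
    (v : Fin j) : c ≤ ξ (some ⟨j, V, v⟩) := by
  simpa [hξ₁] using hc.2 (.root v)

theorem IsMultiplier.le_bestMultiplier (hξ₁ : ξ none = 1) (hV : V.Connected) {c : ℝ}
    (hc : IsMultiplier ξ V c) : c ≤ bestMultiplier ξ V :=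
  have ⟨v⟩ := hV.nonempty
  le_csSup ⟨_, fun _ hc' => hc'.le_apply_some hξ₁ v⟩ hc

theorem bestMultiplier_nonneg (ξ : Option RootedGraph → ℝ) (V : SimpleGraph (Fin j)) :
    0 ≤ bestMultiplier ξ V :=
  Real.sSup_nonneg fun _ hc => hc.1

theorem isMultiplier_bestMultiplier (hξ : ∀ x, 0 ≤ ξ x) (V : SimpleGraph (Fin j)) :
    IsMultiplier ξ V (bestMultiplier ξ V) := by
  refine ⟨bestMultiplier_nonneg ξ V, fun x y hxy => ?_⟩
  rcases (hξ x).eq_or_lt with hx | hx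
  · simpa [← hx] using hξ y
  · rw [← le_div_iff₀ hx]
    exact csSup_le ⟨0, isMultiplier_zero hξ V⟩ fun c hc => (le_div_iff₀ hx).2 (hc.2 hxy)

theorem bestMultiplier_le (hξ : ∀ x, 0 ≤ ξ x) (hξ₁ : ξ none = 1) (V : SimpleGraph (Fin j))
    (v : Fin j) : bestMultiplier ξ V ≤ ξ (some ⟨j, V, v⟩) :=
  (isMultiplier_bestMultiplier hξ V).le_apply_some hξ₁ v

section Mul

variable {j₁ j₂ : ℕ} {V₁ : SimpleGraph (Fin j₁)} {V₂ : SimpleGraph (Fin j₂)} {a : Fin j₁}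
  {b : Fin j₂}

theorem IsMultiplier.mul {c₁ c₂ : ℝ} (h₁ : IsMultiplier ξ V₁ c₁) (h₂ : IsMultiplier ξ V₂ c₂)
    (f : bridgeJoin V₁ V₂ a b ≃g V) : IsMultiplier ξ V (c₁ * c₂) := by
  refine ⟨mul_nonneg h₁.1 h₂.1, fun x y hxy => ?_⟩
  obtain ⟨z, ⟨hxz, hzy⟩ | ⟨hxz, hzy⟩⟩ := hxy.exists_of_bridgeJoin f
  · calc c₁ * c₂ * ξ x = c₂ * (c₁ * ξ x) := by ring
      _ ≤ c₂ * ξ z := mul_le_mul_of_nonneg_left (h₁.2 hxz) h₂.1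
      _ ≤ ξ y := h₂.2 hzy
  · calc c₁ * c₂ * ξ x = c₁ * (c₂ * ξ x) := by ring
      _ ≤ c₁ * ξ z := mul_le_mul_of_nonneg_left (h₂.2 hxz) h₁.1
      _ ≤ ξ y := h₁.2 hzy

theorem bestMultiplier_mul_le (hξ : ∀ x, 0 ≤ ξ x) (hξ₁ : ξ none = 1) (hV : V.Connected)
    (f : bridgeJoin V₁ V₂ a b ≃g V) :
    bestMultiplier ξ V₁ * bestMultiplier ξ V₂ ≤ bestMultiplier ξ V :=
  ((isMultiplier_bestMultiplier hξ V₁).mul (isMultiplier_bestMultiplier hξ V₂) f).le_bestMultiplier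
    hξ₁ hV

end Mul

theorem le_bestMultiplier_mul (hξ₁ : ξ none = 1) (hV : V.Connected) {p q : ℝ} (hp : 0 ≤ p)
    (hq : 0 ≤ q) (h : ∀ x y, Attaches V x y → q * ξ x ≤ p * ξ y) :
    q ≤ bestMultiplier ξ V * p := by
  rcases hp.eq_or_lt with rfl | hp
  · obtain ⟨v⟩ := hV.nonempty
    simpa [hξ₁] using h _ _ (.root v)
  · rw [← div_le_iff₀ hp]
    refine IsMultiplier.le_bestMultiplier hξ₁ hV ⟨div_nonneg hq hp.le, fun x y hxy => ?_⟩
    rw [div_mul_eq_mul_div, div_le_iff₀' hp]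
    exact h x y hxy

theorem bridgeJoin_iso_reachable_deleteEdges_iff {α β γ : Type*} {U : SimpleGraph α}
    {V : SimpleGraph β} {G : SimpleGraph γ} {a : α} {b : β} (hU : U.Connected)
    (e : bridgeJoin U V a b ≃g G) {x : γ} :
    (G.deleteEdges {s(e (.inl a), e (.inr b))}).Reachable (e (.inl a)) x ↔
      ∃ y, e (.inl y) = x := by
  let e' : U ⊕g V ≃g G.deleteEdges {s(e (.inl a), e (.inr b))} :=
    ⟨e.toEquiv, by
      intro z w
      rw [← bridgeJoin_deleteEdges (a := a) (b := b)]
      simp [e.map_adj_iff]⟩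
  obtain ⟨z, rfl⟩ := e.surjective x
  refine (e'.reachable_iff.trans (sum_reachable_inl_iff hU)).trans ?_
  simp [e.injective.eq_iff]

theorem bridgeForest_adj_of_bridgeJoin_iso {α β γ : Type*} {U : SimpleGraph α} {V : SimpleGraph β}
    {G : SimpleGraph γ} {a : α} {b : β} (hU : U.Connected) (e : bridgeJoin U V a b ≃g G) :
    (bridgeForest G).Adj (e (.inl a)) (e (.inr b)) := by
  refine bridgeForest_adj.2 ⟨e.map_adj_iff.2 (by simp), ?_⟩
  rw [SimpleGraph.isBridge_iff, bridgeJoin_iso_reachable_deleteEdges_iff hU e]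
  simp [e.injective.eq_iff]

theorem sum_card_filter_bridgeForest_adj_le {h : SimpleGraph (Fin j) → ℝ}
    {s : Finset (SimpleGraph (Fin j))} (hs : ∀ G ∈ s, 0 ≤ h G) (hj : 1 ≤ j) :
    ∑ G ∈ s, (#{p : Fin j × Fin j | (bridgeForest G).Adj p.1 p.2} : ℝ) * h G ≤
      2 * (j - 1) * ∑ G ∈ s, h G := by
  have : Nonempty (Fin j) := ⟨⟨0, hj⟩⟩
  rw [Finset.mul_sum]
  refine Finset.sum_le_sum fun G hG => mul_le_mul_of_nonneg_right ?_ (hs G hG)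
  have hcard : (#{p : Fin j × Fin j | (bridgeForest G).Adj p.1 p.2} : ℝ) + 2 ≤ 2 * j := by
    exact_mod_cast (card_filter_bridgeForest_adj_add_two_le G).trans_eq (by simp)
  linarith

/-- The set `A`, a rooted graph on `A` and a rooted graph on its complement, encoded by the graph
that arises from joining the two roots, together with the new edge and its orientation. -/
def splitJoin (q : Σ A : Finset (Fin j), (SimpleGraph (Fin #A) × Fin #A) ×
    SimpleGraph (Fin #Aᶜ) × Fin #Aᶜ) : Σ _ : SimpleGraph (Fin j), Fin j × Fin j :=
  ⟨(bridgeJoin q.2.1.1 q.2.2.1 q.2.1.2 q.2.2.2).map (finsetSplit q.1),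
    finsetSplit q.1 (.inl q.2.1.2), finsetSplit q.1 (.inr q.2.2.2)⟩

/-- The isomorphism onto its image underlying `splitJoin`. -/
def splitJoinIso (q : Σ A : Finset (Fin j), (SimpleGraph (Fin #A) × Fin #A) ×
    SimpleGraph (Fin #Aᶜ) × Fin #Aᶜ) :
    bridgeJoin q.2.1.1 q.2.2.1 q.2.1.2 q.2.2.2 ≃g (splitJoin q).1 :=
  SimpleGraph.Iso.map (finsetSplit q.1) _

-- Deleting the new edge leaves `A` as the connected component of the root of `A`.
theorem splitJoin_injOn :
    Set.InjOn (splitJoin (j := j)) {q | q.2.1.1.Connected} := by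
  have hmem {q : Σ A : Finset (Fin j), (SimpleGraph (Fin #A) × Fin #A) ×
      SimpleGraph (Fin #Aᶜ) × Fin #Aᶜ} (hq : q.2.1.1.Connected) (x : Fin j) :
      x ∈ q.1 ↔ ((splitJoin q).1.deleteEdges
        {s((splitJoin q).2.1, (splitJoin q).2.2)}).Reachable (splitJoin q).2.1 x :=
    mem_iff_mem_range_finsetSplit_inl.trans
      (bridgeJoin_iso_reachable_deleteEdges_iff hq (splitJoinIso q)).symm
  rintro ⟨A, ⟨V, a⟩, V', a'⟩ hq ⟨B, ⟨W, b⟩, W', b'⟩ hq' heq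
  obtain rfl : A = B := by
    ext x
    rw [hmem hq, hmem hq', heq]
  obtain ⟨⟨rfl, rfl⟩, rfl, rfl⟩ :=
    bridgeJoin_inj (SimpleGraph.map_injective (finsetSplit A).toEmbedding (congrArg Sigma.fst heq))
  rfl

theorem sum_finset_mul_sum_mul_le {C : GraphClassOn} (hI : ClassIsoInvariant C)
    (hA : ClassAddable C) {h : ∀ {i : ℕ}, SimpleGraph (Fin i) → ℝ}
    (hpos : ∀ {i} (V : SimpleGraph (Fin i)), 0 ≤ h V)
    (hmul : ∀ {i i' l} {V : SimpleGraph (Fin i)} {V' : SimpleGraph (Fin i')}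
      {W : SimpleGraph (Fin l)} {a a'}, W.Connected → bridgeJoin V V' a a' ≃g W →
        h V * h V' ≤ h W) (hj : 1 ≤ j) :
    ∑ A : Finset (Fin j), #A * (∑ V ∈ C.connectedGraphs #A, h V) *
        (#Aᶜ * ∑ V ∈ C.connectedGraphs #Aᶜ, h V) ≤
      2 * (j - 1) * ∑ V ∈ C.connectedGraphs j, h V := by
  let rooted (i : ℕ) : Finset (SimpleGraph (Fin i) × Fin i) := C.connectedGraphs i ×ˢ Finset.univ
  have hrooted (i : ℕ) : i * ∑ V ∈ C.connectedGraphs i, h V = ∑ p ∈ rooted i, h p.1 := by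
    simp [rooted, Finset.sum_product, Finset.mul_sum]
  let pairs := Finset.univ.sigma fun A : Finset (Fin j) => rooted #A ×ˢ rooted #Aᶜ
  have hpairs {q} (hq : q ∈ pairs) :
      q.2.1.1 ∈ C.connectedGraphs #q.1 ∧ q.2.2.1 ∈ C.connectedGraphs #q.1ᶜ := by
    simpa [pairs, rooted] using hq
  have hjoin {q} (hq : q ∈ pairs) : (splitJoin q).1 ∈ C.connectedGraphs j :=
    GraphClassOn.mem_connectedGraphs_of_bridgeJoin_iso hI hA (hpairs hq).1 (hpairs hq).2
      (splitJoinIso q)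
  have hconn {q} (hq : q ∈ pairs) : q.2.1.1.Connected :=
    (GraphClassOn.mem_connectedGraphs.1 (hpairs hq).1).2
  calc ∑ A : Finset (Fin j), #A * (∑ V ∈ C.connectedGraphs #A, h V) *
        (#Aᶜ * ∑ V ∈ C.connectedGraphs #Aᶜ, h V)
      = ∑ q ∈ pairs, h q.2.1.1 * h q.2.2.1 := by
        simp only [pairs, hrooted, Finset.sum_mul_sum, Finset.sum_sigma, Finset.sum_product]
    _ ≤ ∑ q ∈ (C.connectedGraphs j).sigma fun G =>
          {p : Fin j × Fin j | (bridgeForest G).Adj p.1 p.2}, h q.1 := by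
        refine sum_le_sum_of_injOn splitJoin (fun q hq => ?_)
          (splitJoin_injOn.mono fun q hq => hconn hq) (fun q hq => ?_) fun _ _ => hpos _
        · exact Finset.mem_sigma.2 ⟨hjoin hq, by
            simpa using! bridgeForest_adj_of_bridgeJoin_iso (hconn hq) (splitJoinIso q)⟩
        · exact hmul (GraphClassOn.mem_connectedGraphs.1 (hjoin hq)).2 (splitJoinIso q)
    _ = ∑ G ∈ C.connectedGraphs j,
          (#{p : Fin j × Fin j | (bridgeForest G).Adj p.1 p.2} : ℝ) * h G := by
        simp [Finset.sum_sigma]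
    _ ≤ 2 * (j - 1) * ∑ V ∈ C.connectedGraphs j, h V :=
        sum_card_filter_bridgeForest_adj_le (fun G _ => hpos G) hj

theorem sum_finset_card_card_compl (f : ℕ → ℕ → ℝ) (n : ℕ) :
    ∑ A : Finset (Fin n), f #A #Aᶜ = n.factorial *
      ∑ p ∈ antidiagonal n, f p.1 p.2 / (p.1.factorial * p.2.factorial) :=
  calc ∑ A : Finset (Fin n), f #A #Aᶜ
      = ∑ A ∈ (Finset.univ : Finset (Fin n)).powerset, f #A (n - #A) := by
        simp [Finset.card_compl]
    _ = ∑ p ∈ antidiagonal n, n.choose p.1 * f p.1 p.2 := by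
        rw [Finset.sum_powerset_apply_card fun i => f i (n - i),
          Finset.Nat.sum_antidiagonal_eq_sum_range_succ_mk]
        simp
    _ = _ := by
        rw [Finset.mul_sum]
        refine Finset.sum_congr rfl fun p hp => ?_
        rw [← mem_antidiagonal.1 hp, Nat.cast_add_choose]
        ring

namespace GraphClassOn

variable {C : GraphClassOn}

theorem connectedGraphs_zero : C.connectedGraphs 0 = ∅ :=
  Finset.eq_empty_of_forall_notMem fun _ hG =>
    (mem_connectedGraphs.1 hG).2.nonempty.elim Fin.elim0

/-- The exponential-generating-function coefficient of the connected graphs of the class, each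
counted with its best multiplier. -/
def connectedWeight (C : GraphClassOn) (ξ : Option RootedGraph → ℝ) (n : ℕ) : ℝ :=
  (∑ V ∈ C.connectedGraphs n, bestMultiplier ξ V) / n.factorial

theorem connectedWeight_nonneg (ξ : Option RootedGraph → ℝ) (n : ℕ) :
    0 ≤ C.connectedWeight ξ n :=
  div_nonneg (Finset.sum_nonneg fun V _ => bestMultiplier_nonneg ξ V) n.factorial.cast_nonneg

theorem connectedWeight_zero (ξ : Option RootedGraph → ℝ) : C.connectedWeight ξ 0 = 0 := by
  simp [connectedWeight, connectedGraphs_zero]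

theorem mul_connectedWeight_le (hξ : ∀ x, 0 ≤ ξ x) (hξ₁ : ξ none = 1) (n : ℕ) :
    n * C.connectedWeight ξ n ≤
      (1 / n.factorial : ℝ) * ∑ V ∈ C.connectedGraphs n, ∑ v, ξ (some ⟨n, V, v⟩) := by
  calc n * C.connectedWeight ξ n
      = 1 / n.factorial * ∑ V ∈ C.connectedGraphs n, ∑ _ : Fin n, bestMultiplier ξ V := by
        simp only [Finset.sum_const, Finset.card_univ, Fintype.card_fin, nsmul_eq_mul,
          ← Finset.mul_sum, connectedWeight]
        ring
    _ ≤ _ := by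
        gcongr with V _ v
        exact bestMultiplier_le hξ hξ₁ V v

theorem sum_antidiagonal_connectedWeight_le (hI : ClassIsoInvariant C) (hA : ClassAddable C)
    (hξ : ∀ x, 0 ≤ ξ x) (hξ₁ : ξ none = 1) (n : ℕ) :
    ∑ p ∈ antidiagonal n, p.1 * C.connectedWeight ξ p.1 * (p.2 * C.connectedWeight ξ p.2) ≤
      2 * (n - 1) * C.connectedWeight ξ n := by
  rcases n.eq_zero_or_pos with rfl | hn
  · simp [connectedWeight_zero]
  have hle := sum_finset_mul_sum_mul_le hI hA (bestMultiplier_nonneg ξ)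
    (bestMultiplier_mul_le hξ hξ₁) hn
  rw [sum_finset_card_card_compl fun i l => i * (∑ V ∈ C.connectedGraphs i, bestMultiplier ξ V) *
    (l * ∑ V ∈ C.connectedGraphs l, bestMultiplier ξ V), ← le_div_iff₀' (by positivity)] at hle
  calc _ = _ := Finset.sum_congr rfl fun p _ => by rw [connectedWeight, connectedWeight]; ring
    _ ≤ _ := hle
    _ = _ := mul_div_assoc _ _ _

theorem sum_connectedWeight_le (hI : ClassIsoInvariant C) (hA : ClassAddable C)
    (hξ : ∀ x, 0 ≤ ξ x) (hξ₁ : ξ none = 1)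
    (hsum : ∀ N, ∑ n ∈ range (N + 1), (1 / n.factorial : ℝ) *
      ∑ V ∈ C.connectedGraphs n, ∑ v, ξ (some ⟨n, V, v⟩) ≤ 1) (N : ℕ) :
    ∑ n ∈ range N, C.connectedWeight ξ n ≤ 1 / 2 :=
  sum_range_le_half_of_sum_antidiagonal_le (connectedWeight_nonneg ξ) (connectedWeight_zero ξ)
    (fun N => (Finset.sum_le_sum fun n _ => mul_connectedWeight_le hξ hξ₁ n).trans (hsum N))
    (sum_antidiagonal_connectedWeight_le hI hA hξ hξ₁) N

theorem mul_card_graphs_div_factorial_le (hI : ClassIsoInvariant C) (hD : ClassDecomposable C)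
    (n : ℕ) :
    n * (#(C.graphs n) / n.factorial : ℝ) ≤ ∑ p ∈ antidiagonal n,
      p.1 * (#(C.connectedGraphs p.1) / p.1.factorial : ℝ) *
        (#(C.graphs p.2) / p.2.factorial) := by
  have hle : (n * #(C.graphs n) : ℝ) ≤
      ∑ A : Finset (Fin n), (#A : ℝ) * (#(C.connectedGraphs #A) * #(C.graphs #Aᶜ)) := by
    exact_mod_cast mul_card_graphs_le_sum hI hD n
  rw [sum_finset_card_card_compl fun i l => i * (#(C.connectedGraphs i) * #(C.graphs l) : ℝ),
    ← div_le_iff₀' (by positivity), mul_div_assoc] at hle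
  exact hle.trans_eq (Finset.sum_congr rfl fun p _ => by ring)

theorem sum_card_graphs_div_factorial_mul_le_exp (hI : ClassIsoInvariant C) (hA : ClassAddable C)
    (hξ : ∀ x, 0 ≤ ξ x) (hξ₁ : ξ none = 1)
    (hsum : ∀ N, ∑ n ∈ range (N + 1), (1 / n.factorial : ℝ) *
      ∑ V ∈ C.connectedGraphs n, ∑ v, ξ (some ⟨n, V, v⟩) ≤ 1)
    {g : ℕ → ℝ} (hg : ∀ s, 0 ≤ g s) (hg₀ : g 0 ≤ 1)
    (hgξ : ∀ s j, ∀ V ∈ C.connectedGraphs j, ∀ x y, Attaches V x y →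
      g (s + j) * ξ x ≤ g s * ξ y) (N : ℕ) :
    ∑ s ∈ range (N + 1), (#(C.graphs s) / s.factorial : ℝ) * g s ≤ Real.exp (1 / 2) := by
  refine (sum_range_le_exp_sum_range (k := C.connectedWeight ξ)
    (fun s => mul_nonneg (by positivity) (hg s)) (connectedWeight_nonneg ξ) ?_
    (fun n => ?_) N).trans (Real.exp_le_exp.2 (sum_connectedWeight_le hI hA hξ hξ₁ hsum _))
  · have hcard : (#(C.graphs 0) : ℝ) ≤ 1 := by
      exact_mod_cast Finset.card_le_one_of_subsingleton _
    simpa using mul_le_one₀ hcard (hg 0) hg₀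
  · have hconn {p : ℕ × ℕ} (hp : p ∈ antidiagonal n) :
        #(C.connectedGraphs p.1) / p.1.factorial * g n ≤ C.connectedWeight ξ p.1 * g p.2 := by
      rw [connectedWeight, div_mul_eq_mul_div, div_mul_eq_mul_div, Finset.sum_mul, ← nsmul_eq_mul,
        ← mem_antidiagonal.1 hp, add_comm]
      gcongr
      refine Finset.card_nsmul_le_sum _ _ _ fun V hV => ?_
      exact le_bestMultiplier_mul hξ₁ (mem_connectedGraphs.1 hV).2 (hg _) (hg _) (hgξ _ _ V hV)
    calc n * (#(C.graphs n) / n.factorial * g n)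
        = n * (#(C.graphs n) / n.factorial : ℝ) * g n := by ring
      _ ≤ (∑ p ∈ antidiagonal n, p.1 * (#(C.connectedGraphs p.1) / p.1.factorial : ℝ) *
            (#(C.graphs p.2) / p.2.factorial)) * g n :=
          mul_le_mul_of_nonneg_right (mul_card_graphs_div_factorial_le hI hA.1 n) (hg n)
      _ = ∑ p ∈ antidiagonal n, p.1 * (#(C.graphs p.2) / p.2.factorial : ℝ) *
            (#(C.connectedGraphs p.1) / p.1.factorial * g n) := by
          rw [Finset.sum_mul]
          exact Finset.sum_congr rfl fun p _ => by ring
      _ ≤ ∑ p ∈ antidiagonal n, p.1 * (#(C.graphs p.2) / p.2.factorial : ℝ) *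
            (C.connectedWeight ξ p.1 * g p.2) :=
          Finset.sum_le_sum fun p hp => mul_le_mul_of_nonneg_left (hconn hp) (by positivity)
      _ = _ := Finset.sum_congr rfl fun p _ => by ring

end GraphClassOn

end Multipliers

section MeasureDomination

open MeasureTheory
open scoped BoundedContinuousFunction ENNReal Finset NNReal

variable {X : Type*} [TopologicalSpace X] [MeasurableSpace X] [BorelSpace X]

theorem measure_le_of_forall_lintegral_le [HasOuterApproxClosed X] {μ ν : Measure X}
    [IsFiniteMeasure μ] [μ.WeaklyRegular] [IsFiniteMeasure ν]
    (h : ∀ f : X →ᵇ ℝ≥0, ∫⁻ x, f x ∂μ ≤ ∫⁻ x, f x ∂ν) : μ ≤ ν := by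
  refine Measure.le_iff.2 fun A hA => ?_
  rw [hA.measure_eq_iSup_isClosed_of_ne_top (measure_ne_top μ A)]
  refine iSup₂_le fun F hFA => iSup_le fun hF => le_trans ?_ (measure_mono hFA)
  exact le_of_tendsto_of_tendsto' (HasOuterApproxClosed.tendsto_lintegral_apprSeq hF μ)
    (HasOuterApproxClosed.tendsto_lintegral_apprSeq hF ν) fun n => h _

variable [CompactSpace X]

theorem integrable_continuousMap (f : C(X, ℝ)) (μ : Measure X) [IsFiniteMeasure μ] :
    Integrable f μ :=
  f.continuous.integrable_of_hasCompactSupport (.of_compactSpace f)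

theorem lintegral_withDensity_ofReal_eq (μ : Measure X) [IsFiniteMeasure μ] {α : C(X, ℝ)}
    (hα : ∀ x, 0 ≤ α x) (f : X →ᵇ ℝ≥0) :
    ∫⁻ x, f x ∂μ.withDensity (fun x => ENNReal.ofReal (α x)) =
      ENNReal.ofReal (∫ x, α x * (f x : ℝ) ∂μ) := by
  let f' : C(X, ℝ) := ⟨fun x => (f x : ℝ), by fun_prop⟩
  rw [lintegral_withDensity_eq_lintegral_mul _ (by fun_prop) (by fun_prop),
    ofReal_integral_eq_lintegral_ofReal (f := fun x => α x * (f x : ℝ))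
      (integrable_continuousMap (α * f') μ)
      (.of_forall fun x => mul_nonneg (hα x) (f x).2)]
  refine lintegral_congr fun x => ?_
  rw [Pi.mul_apply, ENNReal.ofReal_mul (hα x), ENNReal.ofReal_coe_nnreal]

variable [TopologicalSpace.PseudoMetrizableSpace X] {μ ν ρ : Measure X} [IsFiniteMeasure μ]
  [IsFiniteMeasure ν] {α β : C(X, ℝ)}

theorem withDensity_ofReal_le_of_forall_integral_le (hα : ∀ x, 0 ≤ α x) (hβ : ∀ x, 0 ≤ β x)
    (h : ∀ f : C(X, ℝ), (∀ x, 0 ≤ f x) → ∫ x, α x * f x ∂μ ≤ ∫ x, β x * f x ∂ν) :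
    μ.withDensity (fun x => ENNReal.ofReal (α x)) ≤
      ν.withDensity (fun x => ENNReal.ofReal (β x)) := by
  have hfinite (κ : Measure X) [IsFiniteMeasure κ] (γ : C(X, ℝ)) :
      IsFiniteMeasure (κ.withDensity fun x => ENNReal.ofReal (γ x)) :=
    isFiniteMeasure_withDensity_ofReal (integrable_continuousMap γ κ).2
  have := hfinite μ α
  have := hfinite ν β
  refine measure_le_of_forall_lintegral_le fun f => ?_
  rw [lintegral_withDensity_ofReal_eq μ hα, lintegral_withDensity_ofReal_eq ν hβ]
  exact ENNReal.ofReal_le_ofReal (h ⟨fun x => (f x : ℝ), by fun_prop⟩ fun x => (f x).2)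

theorem absolutelyContinuous_of_forall_integral_le (hβ : ∀ x, 0 ≤ β x)
    (h : ∀ f : C(X, ℝ), (∀ x, 0 ≤ f x) → ∫ x, f x ∂μ ≤ ∫ x, β x * f x ∂ν) : μ ≪ ν := by
  have hle : μ.withDensity (fun x => ENNReal.ofReal ((1 : C(X, ℝ)) x)) ≤ _ :=
    withDensity_ofReal_le_of_forall_integral_le (fun _ => zero_le_one) hβ (by simpa using h)
  simp only [ContinuousMap.one_apply, ENNReal.ofReal_one, withDensity_const, one_smul] at hle
  exact hle.absolutelyContinuous.trans (withDensity_absolutelyContinuous _ _)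

theorem ae_rnDeriv_mul_le_rnDeriv_mul [IsFiniteMeasure ρ] (hμ : μ ≪ ρ) (hν : ν ≪ ρ)
    (hα : ∀ x, 0 ≤ α x) (hβ : ∀ x, 0 ≤ β x)
    (h : ∀ f : C(X, ℝ), (∀ x, 0 ≤ f x) → ∫ x, α x * f x ∂μ ≤ ∫ x, β x * f x ∂ν) :
    ∀ᵐ x ∂ρ, (μ.rnDeriv ρ x).toReal * α x ≤ (ν.rnDeriv ρ x).toReal * β x := by
  have hdensity (κ : Measure X) [IsFiniteMeasure κ] (γ : C(X, ℝ)) (hκ : κ ≪ ρ) :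
      ρ.withDensity (fun x => κ.rnDeriv ρ x * ENNReal.ofReal (γ x)) =
        κ.withDensity fun x => ENNReal.ofReal (γ x) := by
    conv_rhs => rw [← Measure.withDensity_rnDeriv_eq κ ρ hκ]
    exact withDensity_mul _ (Measure.measurable_rnDeriv κ ρ) (by fun_prop)
  have hle : (fun x => μ.rnDeriv ρ x * ENNReal.ofReal (α x)) ≤ᵐ[ρ]
      fun x => ν.rnDeriv ρ x * ENNReal.ofReal (β x) := by
    refine ae_le_of_forall_setLIntegral_le_of_sigmaFinite
      ((Measure.measurable_rnDeriv μ ρ).mul (by fun_prop)) fun s hs _ => ?_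
    rw [← withDensity_apply _ hs, ← withDensity_apply _ hs, hdensity μ α hμ, hdensity ν β hν]
    exact withDensity_ofReal_le_of_forall_integral_le hα hβ h s
  filter_upwards [hle, Measure.rnDeriv_ne_top ν ρ] with x hx htop
  have := ENNReal.toReal_mono (ENNReal.mul_ne_top htop ENNReal.ofReal_ne_top) hx
  rwa [ENNReal.toReal_mul, ENNReal.toReal_mul, ENNReal.toReal_ofReal (hα x),
    ENNReal.toReal_ofReal (hβ x)] at this

namespace GraphClassOn

variable {C : GraphClassOn} {μ : ℕ → Measure X} [∀ s, IsFiniteMeasure (μ s)]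
  {ξ : Option RootedGraph → C(X, ℝ)}

theorem absolutelyContinuous_of_attaches (hbot : ⊥ ∈ C.connectedGraphs 1) (hξ : ∀ x p, 0 ≤ ξ x p)
    (hξ₁ : ξ none = 1)
    (hμ : ∀ s j, ∀ V ∈ C.connectedGraphs j, ∀ x y, Attaches V x y → ∀ f : C(X, ℝ), (∀ p, 0 ≤ f p) →
      ∫ p, ξ x p * f p ∂μ (s + j) ≤ ∫ p, ξ y p * f p ∂μ s) (s : ℕ) : μ s ≪ μ 0 := by
  induction s with
  | zero => exact .rfl
  | succ s ih =>
    refine Measure.AbsolutelyContinuous.trans ?_ ih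
    exact absolutelyContinuous_of_forall_integral_le (hξ _) fun f hf => by
      simpa [hξ₁] using hμ s 1 ⊥ hbot _ _ (.root 0) f hf

theorem sum_card_graphs_div_factorial_mul_measureReal_le_exp (hI : ClassIsoInvariant C)
    (hA : ClassAddable C) (hbot : ⊥ ∈ C.connectedGraphs 1) [IsProbabilityMeasure (μ 0)]
    (hξ : ∀ x p, 0 ≤ ξ x p) (hξ₁ : ξ none = 1)
    (hμ : ∀ s j, ∀ V ∈ C.connectedGraphs j, ∀ x y, Attaches V x y → ∀ f : C(X, ℝ), (∀ p, 0 ≤ f p) →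
      ∫ p, ξ x p * f p ∂μ (s + j) ≤ ∫ p, ξ y p * f p ∂μ s)
    (hsum : ∀ᵐ p ∂μ 0, ∀ N, ∑ n ∈ Finset.range (N + 1), (1 / n.factorial : ℝ) *
      ∑ V ∈ C.connectedGraphs n, ∑ v, ξ (some ⟨n, V, v⟩) p ≤ 1) (S : ℕ) :
    ∑ s ∈ Finset.range (S + 1), (#(C.graphs s) / s.factorial : ℝ) * (μ s).real Set.univ ≤
      Real.exp (1 / 2) := by
  let g (s : ℕ) (p : X) : ℝ := ((μ s).rnDeriv (μ 0) p).toReal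
  have hac := absolutelyContinuous_of_attaches hbot hξ hξ₁ hμ
  have hg₀ : ∀ᵐ p ∂μ 0, g 0 p = 1 := by
    filter_upwards [Measure.rnDeriv_self (μ 0)] with p hp
    simp [g, hp]
  have hgξ : ∀ᵐ p ∂μ 0, ∀ s j, ∀ V ∈ C.connectedGraphs j, ∀ x y, Attaches V x y →
      g (s + j) p * ξ x p ≤ g s p * ξ y p := by
    simp only [ae_all_iff]
    exact fun s j V hV x y hxy => ae_rnDeriv_mul_le_rnDeriv_mul (hac _) (hac _) (hξ x) (hξ y)
      (hμ s j V hV x y hxy)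
  have hle : ∀ᵐ p ∂μ 0, ∑ s ∈ Finset.range (S + 1), (#(C.graphs s) / s.factorial : ℝ) * g s p ≤
      Real.exp (1 / 2) := by
    filter_upwards [hg₀, hgξ, hsum] with p hp₀ hpξ hpsum
    exact sum_card_graphs_div_factorial_mul_le_exp (ξ := (ξ · p)) (g := (g · p)) hI hA
      (hξ · p) (by simp [hξ₁]) hpsum (fun s => ENNReal.toReal_nonneg) hp₀.le hpξ S
  have hg s : Integrable (fun p => (#(C.graphs s) / s.factorial : ℝ) * g s p) (μ 0) :=
    Measure.integrable_toReal_rnDeriv.const_mul _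
  calc ∑ s ∈ Finset.range (S + 1), (#(C.graphs s) / s.factorial : ℝ) * (μ s).real Set.univ
      = ∫ p, ∑ s ∈ Finset.range (S + 1), (#(C.graphs s) / s.factorial : ℝ) * g s p ∂μ 0 := by
        rw [integral_finsetSum _ fun s _ => hg s]
        simp only [g, integral_const_mul, Measure.integral_toReal_rnDeriv (hac _)]
    _ ≤ ∫ _, Real.exp (1 / 2) ∂μ 0 :=
        integral_mono_ae (integrable_finsetSum _ fun s _ => hg s) (integrable_const _) hle
    _ = Real.exp (1 / 2) := by simp

end GraphClassOn

end MeasureDomination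

section DensitySpace

open scoped Uniformity

/-- The space of possible values of all pendant densities of a graph. The factorial bounds are
those of `card_pendantCopies_le`; they make the space compact. -/
abbrev DensitySpace : Type :=
  ∀ R : RootedGraph, Set.Icc (0 : ℝ) R.1.factorial

/-- The continuous function reading off the density of a rooted graph. The empty rooted graph has
density `1`. -/
def densityCoord : Option RootedGraph → C(DensitySpace, ℝ)
  | none => 1
  | some R => ⟨fun p => p R, by fun_prop⟩

/-- The numbers of pendant copies of all rooted graphs in `G`, per vertex of `G`. The clipping
is only effective for rooted graphs that are large compared to `G`. -/
def densityVector {n : ℕ} (G : SimpleGraph (Fin n)) : DensitySpace := fun R =>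
  Set.projIcc 0 (R.1.factorial : ℝ) (Nat.cast_nonneg _) (copyCount G (some R) / n)

theorem densityCoord_nonneg (x : Option RootedGraph) (p : DensitySpace) : 0 ≤ densityCoord x p := by
  cases x with
  | none => exact zero_le_one
  | some R => exact (p R).2.1

variable {n m j : ℕ}

theorem copyCount_some_le {G : SimpleGraph (Fin n)} (hG : G.Connected) {R : RootedGraph}
    (hR : 2 * R.1 < n) : (copyCount G (some R) : ℝ) ≤ R.1.factorial * n := by
  have h := card_pendantCopies_le hG (by simpa using hR) R.2.1 R.2.2
  rw [Fintype.card_fin, Fintype.card_fin] at h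
  exact_mod_cast h

theorem densityCoord_some_densityVector {G : SimpleGraph (Fin n)} (hG : G.Connected)
    {R : RootedGraph} (hR : 2 * R.1 < n) :
    densityCoord (some R) (densityVector G) = copyCount G (some R) / n := by
  have hmem : (copyCount G (some R) / n : ℝ) ∈ Set.Icc 0 (R.1.factorial : ℝ) :=
    ⟨by positivity, div_le_of_le_mul₀ (by positivity) (by positivity) (copyCount_some_le hG hR)⟩
  exact congrArg Subtype.val (Set.projIcc_of_mem (Nat.cast_nonneg _) hmem)

theorem eventually_densityCoord_densityVector (x : Option RootedGraph) :
    ∀ᶠ n in atTop, ∀ G : SimpleGraph (Fin n), G.Connected →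
      densityCoord x (densityVector G) = copyCount G x / n := by
  cases x with
  | none =>
    filter_upwards [eventually_ne_atTop 0] with n hn G _
    simp [densityCoord, copyCount, hn]
  | some R =>
    filter_upwards [eventually_gt_atTop (2 * R.1)] with n hn G hG
    exact densityCoord_some_densityVector hG hn

theorem abs_div_sub_div_add_le {p q x y c : ℝ} (hx : 0 < x) (hy : 0 ≤ y) (hp : 0 ≤ p)
    (hpc : p ≤ c * x) (hpq : p ≤ q + c) (hqp : q ≤ p + (y + 1) * c) :
    |p / x - q / (x + y)| ≤ (y + 1) * c / x := by
  have hc : 0 ≤ c := nonneg_of_mul_nonneg_left (hp.trans hpc) hx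
  have hsub : p / x - q / (x + y) = (p * y + (p - q) * x) / (x * (x + y)) := by
    field_simp
    ring
  have hbound : (y + 1) * c / x = (y + 1) * c * (x + y) / (x * (x + y)) := by
    field_simp
  rw [hsub, hbound, abs_div, abs_of_pos (by positivity : 0 < x * (x + y))]
  refine div_le_div_of_nonneg_right (abs_le.2 ⟨?_, ?_⟩) (by positivity)
  · have := mul_le_mul_of_nonneg_right hqp hx.le
    nlinarith [mul_nonneg hp hy, mul_nonneg (mul_nonneg (add_nonneg hy zero_le_one) hc) hy]
  · have := mul_le_mul_of_nonneg_right hpq hx.le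
    nlinarith [mul_le_mul_of_nonneg_right hpc hy,
      mul_nonneg (mul_nonneg (add_nonneg hy zero_le_one) hc) hy]

variable {B : SimpleGraph (Fin m)} {V : SimpleGraph (Fin j)} {G : SimpleGraph (Fin (m + j))}
  {a : Fin m} {v : Fin j}

theorem dist_densityVector_le_of_bridgeJoin_iso (hB : B.Connected) (hV : V.Connected)
    (e : bridgeJoin B V a v ≃g G) {R : RootedGraph} (hR : 2 * R.1 < m) :
    dist (densityVector B R) (densityVector G R) ≤ (j + 1) * R.1.factorial / m := by
  refine (Set.abs_projIcc_sub_projIcc _).trans ?_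
  rw [Nat.cast_add]
  have hcard : 2 * Fintype.card (Fin R.1) < Fintype.card (Fin m) := by simpa using hR
  have hBG := card_pendantCopies_le_card_pendantCopies_bridgeJoin_add (P := R.2.1) (r := R.2.2)
    (V := V) (a := a) (b := v) hB hcard
  have hGB := card_pendantCopies_bridgeJoin_le (P := R.2.1) (r := R.2.2) (a := a) (b := v) hB hV
    hcard
  rw [card_pendantCopies_eq_of_iso e] at hBG hGB
  simp only [Fintype.card_fin] at hBG hGB
  exact abs_div_sub_div_add_le (by exact_mod_cast (by lia : 0 < m)) (Nat.cast_nonneg _)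
    (Nat.cast_nonneg _) (copyCount_some_le hB hR) (by exact_mod_cast hBG) (by exact_mod_cast hGB)

theorem eventually_apply_densityVector_le (hV : V.Connected) (f : C(DensitySpace, ℝ)) {ε : ℝ}
    (hε : 0 < ε) :
    ∀ᶠ m in atTop, ∀ B : SimpleGraph (Fin m), B.Connected → ∀ (G : SimpleGraph (Fin (m + j))) a v,
      Nonempty (bridgeJoin B V a v ≃g G) → f (densityVector B) ≤ f (densityVector G) + ε := by
  let l : Filter (Σ m, SimpleGraph (Fin m) × SimpleGraph (Fin (m + j))) :=
    comap Sigma.fst atTop ⊓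
      𝓟 {t | t.2.1.Connected ∧ ∃ a v, Nonempty (bridgeJoin t.2.1 V a v ≃g t.2.2)}
  have hcoord (R : RootedGraph) :
      Tendsto (fun t => (densityVector t.2.1 R, densityVector t.2.2 R)) l (𝓤 _) := by
    have hfst : Tendsto Sigma.fst l atTop := tendsto_comap.mono_left inf_le_left
    refine tendsto_uniformity_iff_dist_tendsto_zero.2 <| squeeze_zero'
      (.of_forall fun _ => dist_nonneg) ?_
      ((tendsto_const_div_atTop_nhds_zero_nat ((j + 1) * R.1.factorial : ℝ)).comp hfst)
    rw [eventually_inf_principal]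
    filter_upwards [tendsto_comap.eventually (eventually_gt_atTop (2 * R.1))]
      with t ht ⟨hB, a, v, ⟨e⟩⟩
    exact dist_densityVector_le_of_bridgeJoin_iso hB hV e ht
  have hvector : Tendsto (fun t => (densityVector t.2.1, densityVector t.2.2)) l
      (𝓤 DensitySpace) := by
    rw [Pi.uniformity, tendsto_iInf]
    exact fun R => tendsto_comap_iff.2 (hcoord R)
  have hf : Tendsto (fun t => dist (f (densityVector t.2.1)) (f (densityVector t.2.2))) l (𝓝 0) :=
    tendsto_uniformity_iff_dist_tendsto_zero.1
      (Tendsto.comp (CompactSpace.uniformContinuous_of_continuous f.continuous) hvector)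
  have hlt := hf.eventually (gt_mem_nhds hε)
  rw [eventually_inf_principal, eventually_comap] at hlt
  filter_upwards [hlt] with m hm B hB G a v hBG
  have hdist := hm ⟨m, B, G⟩ rfl ⟨hB, a, v, hBG⟩
  exact sub_le_iff_le_add'.1 ((le_abs_self _).trans hdist.le)

end DensitySpace

section SubsequentialLimits

open MeasureTheory
open scoped BoundedContinuousFunction Finset

section Measure

variable {X : Type*} [TopologicalSpace X] [CompactSpace X] [MeasurableSpace X]
  [BorelSpace X]

theorem ae_le_of_tendsto_integral {κ : Type*} {l : Filter κ} [l.NeBot] {μ : Measure X}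
    [IsFiniteMeasure μ] {L : κ → C(X, ℝ) → ℝ}
    (hL : ∀ f : C(X, ℝ), Tendsto (fun k => L k f) l (𝓝 (∫ x, f x ∂μ))) {g : C(X, ℝ)} {c : ℝ}
    (hg : ∀ᶠ k in l, L k ((g - .const X c) ⊔ 0) = 0) : ∀ᵐ x ∂μ, g x ≤ c := by
  have hzero : ∫ x, ((g - .const X c) ⊔ 0) x ∂μ = 0 :=
    tendsto_nhds_unique (hL _) (tendsto_const_nhds.congr' (hg.mono fun _ h => h.symm))
  have hae := (integral_eq_zero_iff_of_nonneg (fun x => le_max_right _ _)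
    (integrable_continuousMap ((g - .const X c) ⊔ 0) μ)).1 hzero
  filter_upwards [hae] with x hx
  exact sub_nonpos.1 (max_eq_right_iff.1 hx)

variable [T2Space X]

theorem exists_probabilityMeasure_card_mul_integral_eq_sum [Nonempty X] {ι : Type*}
    (s : Finset ι) (a : ι → X) :
    ∃ P : ProbabilityMeasure X, ∀ f : C(X, ℝ), (#s : ℝ) * ∫ x, f x ∂P = ∑ i ∈ s, f (a i) := by
  obtain rfl | hs := s.eq_empty_or_nonempty
  · exact ⟨⟨Measure.dirac (Classical.arbitrary X), inferInstance⟩, by simp⟩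
  have hcard : (#s : ℝ) ≠ 0 := by simpa using hs.ne_empty
  let P : Measure X := (#s : ENNReal)⁻¹ • ∑ i ∈ s, Measure.dirac (a i)
  have hP : IsProbabilityMeasure P := ⟨by
    simpa [P] using ENNReal.inv_mul_cancel (by simpa using hs.ne_empty) (ENNReal.natCast_ne_top _)⟩
  refine ⟨⟨P, hP⟩, fun f => ?_⟩
  simp only [ProbabilityMeasure.coe_mk, P]
  rw [integral_smul_measure, integral_finsetSum_measure fun i _ => integrable_continuousMap f _]
  simp [integral_dirac, hcard]

theorem exists_isFiniteMeasure_tendsto_mul_sum [Nonempty X] {α : Type*} (u : Ultrafilter α)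
    {ι : α → Type*} (s : ∀ n, Finset (ι n)) (a : ∀ n, ι n → X) {r : α → ℝ} (hr : ∀ n, 0 ≤ r n)
    {M : ℝ} (hM : ∀ᶠ n in u, r n * #(s n) ≤ M) :
    ∃ μ : Measure X, IsFiniteMeasure μ ∧ ∀ f : C(X, ℝ),
      Tendsto (fun n => r n * ∑ i ∈ s n, f (a n i)) u (𝓝 (∫ x, f x ∂μ)) := by
  choose P hP using fun n => exists_probabilityMeasure_card_mul_integral_eq_sum (s n) (a n)
  obtain ⟨Q, -, hQ⟩ := isCompact_univ.ultrafilter_le_nhds (u.map P) (by simp)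
  have hmass : ∀ᶠ n in u, r n * #(s n) ∈ Set.Icc 0 M := by
    filter_upwards [hM] with n hn
    exact ⟨mul_nonneg (hr n) (Nat.cast_nonneg _), hn⟩
  obtain ⟨ρ, hρmem, hρ⟩ :=
    isCompact_Icc.ultrafilter_le_nhds (u.map fun n => r n * #(s n)) (le_principal_iff.2 hmass)
  refine ⟨ENNReal.ofReal ρ • (Q : Measure X), Measure.smul_finite _ ENNReal.ofReal_ne_top,
    fun f => ?_⟩
  have hf : Tendsto (fun n => ∫ x, f x ∂(P n : Measure X)) u (𝓝 (∫ x, f x ∂(Q : Measure X))) :=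
    ProbabilityMeasure.tendsto_iff_forall_integral_tendsto.1 hQ
      (BoundedContinuousFunction.mkOfCompact f)
  rw [integral_smul_measure, ENNReal.toReal_ofReal hρmem.1, smul_eq_mul]
  exact (Tendsto.mul hρ hf).congr fun n => by rw [mul_assoc, hP]

end Measure

namespace GraphClassOn

/-- With `K n` the number of connected graphs of the class on `Fin n`, the ratio
`(n)ₛ K (n - s) / K n`. Multiplied by `c_s / s!`, it bounds the number of graphs having a component
that misses exactly `s` vertices, relative to `K n`. -/
def connectedRatio (C : GraphClassOn) (s n : ℕ) : ℝ :=
  n.descFactorial s / #(C.connectedGraphs n) * #(C.connectedGraphs (n - s))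

/-- The sum of `f` over the density vectors of the connected graphs on `n - s` vertices, with the
normalization of `GraphClassOn.connectedRatio`. -/
def densitySum (C : GraphClassOn) (s n : ℕ) (f : C(DensitySpace, ℝ)) : ℝ :=
  n.descFactorial s / #(C.connectedGraphs n) *
    ∑ G ∈ C.connectedGraphs (n - s), f (densityVector G)

variable {C : GraphClassOn} {n m j : ℕ}

theorem densitySum_one (C : GraphClassOn) (s n : ℕ) :
    C.densitySum s n 1 = C.connectedRatio s n := by
  simp [densitySum, connectedRatio]

theorem card_connectedGraphs_pos (hI : ClassIsoInvariant C) (hA : ClassAddable C)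
    (h : C (Fin 1) ⊥) (hn : n ≠ 0) : 0 < #(C.connectedGraphs n) := by
  obtain ⟨n, rfl⟩ := Nat.exists_eq_succ_of_ne_zero hn
  exact (connectedGraphs_nonempty hI hA h n).card_pos

theorem connectedRatio_zero (hI : ClassIsoInvariant C) (hA : ClassAddable C) (h : C (Fin 1) ⊥)
    (hn : n ≠ 0) : C.connectedRatio 0 n = 1 := by
  simp [connectedRatio, (card_connectedGraphs_pos hI hA h hn).ne']

theorem mul_card_connectedGraphs_le (hI : ClassIsoInvariant C) (hA : ClassAddable C)
    (h : C (Fin 1) ⊥) (hm : 2 ≤ m) :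
    (m : ℝ) * #(C.connectedGraphs m) ≤ #(C.connectedGraphs (m + 1)) := by
  have hattach := descFactorial_mul_sum_copyCount_mul_le (m := m) (F := fun _ => 1)
    (F' := fun _ => 1) hI hA (bot_mem_connectedGraphs_one h) (.root 0) (fun _ => zero_le_one)
    fun _ _ _ _ _ _ => le_rfl
  have hcopies : ∑ G ∈ C.connectedGraphs (m + 1),
      (copyCount G (some ⟨1, (⊥ : SimpleGraph (Fin 1)), 0⟩) : ℝ) * 1 ≤
        #(C.connectedGraphs (m + 1)) • (m + 1 : ℝ) := by
    refine Finset.sum_le_card_nsmul _ _ _ fun G hG => ?_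
    simpa using copyCount_some_le (R := ⟨1, ⊥, 0⟩) (mem_connectedGraphs.1 hG).2 (by lia)
  have hle := hattach.trans hcopies
  simp only [copyCount, Nat.descFactorial_one, mul_one, Finset.sum_const, nsmul_eq_mul,
    Nat.cast_add_one] at hle
  nlinarith

theorem connectedRatio_le (hI : ClassIsoInvariant C) (hA : ClassAddable C) (h : C (Fin 1) ⊥)
    (s : ℕ) (hn : s + 3 ≤ n) : C.connectedRatio s n ≤ 2 ^ s := by
  induction s with
  | zero => exact (connectedRatio_zero hI hA h (by lia)).le
  | succ s ih =>
    obtain ⟨m, rfl⟩ : ∃ m, n = m + (s + 1) := ⟨n - (s + 1), by lia⟩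
    have ih := ih (by lia)
    have hsub : m + (s + 1) - s = m + 1 := by lia
    have hm : (1 : ℝ) ≤ m := by exact_mod_cast (by lia : 1 ≤ m)
    have hstep : (m + 1 : ℝ) * #(C.connectedGraphs m) ≤ 2 * #(C.connectedGraphs (m + 1)) := by
      nlinarith [mul_card_connectedGraphs_le hI hA h (m := m) (by lia),
        (Nat.cast_nonneg _ : (0 : ℝ) ≤ #(C.connectedGraphs m))]
    unfold connectedRatio at ih ⊢
    rw [hsub] at ih
    rw [Nat.descFactorial_succ, hsub, Nat.add_sub_cancel]
    set K : ℝ := (m + (s + 1)).descFactorial s / #(C.connectedGraphs (m + (s + 1)))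
    calc (((m + 1) * (m + (s + 1)).descFactorial s : ℕ) : ℝ) / #(C.connectedGraphs (m + (s + 1))) *
          #(C.connectedGraphs m) = K * ((m + 1) * #(C.connectedGraphs m)) := by
          simp only [K]
          push_cast
          ring
      _ ≤ K * (2 * #(C.connectedGraphs (m + 1))) := by gcongr
      _ = 2 * (K * #(C.connectedGraphs (m + 1))) := by ring
      _ ≤ 2 ^ (s + 1) := by linarith [pow_succ (2 : ℝ) s]

variable {V : SimpleGraph (Fin j)} {x y : Option RootedGraph} {f : C(DensitySpace, ℝ)} {ε : ℝ}

theorem eventually_sum_densityCoord_mul_eq (C : GraphClassOn) (x : Option RootedGraph)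
    (f : C(DensitySpace, ℝ)) :
    ∀ᶠ n in atTop, ∑ G ∈ C.connectedGraphs n, (densityCoord x * f) (densityVector G) =
      (∑ G ∈ C.connectedGraphs n, (copyCount G x : ℝ) * f (densityVector G)) / n := by
  filter_upwards [eventually_densityCoord_densityVector x] with n hn
  rw [Finset.sum_div]
  refine Finset.sum_congr rfl fun G hG => ?_
  rw [ContinuousMap.mul_apply, hn G (mem_connectedGraphs.1 hG).2, div_mul_eq_mul_div]

theorem eventually_descFactorial_mul_sum_densityCoord_mul_le (hI : ClassIsoInvariant C)
    (hA : ClassAddable C) (hV : V ∈ C.connectedGraphs j) (hxy : Attaches V x y)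
    (hf : ∀ p, 0 ≤ f p) (hε : 0 < ε) :
    ∀ᶠ m : ℕ in atTop, (m / (m + j) : ℝ) * ((m + j).descFactorial j *
      ∑ B ∈ C.connectedGraphs m, (densityCoord x * f) (densityVector B)) ≤
        ∑ G ∈ C.connectedGraphs (m + j), (densityCoord y * (f + .const _ ε)) (densityVector G) := by
  filter_upwards [eventually_apply_densityVector_le (mem_connectedGraphs.1 hV).2 f hε,
    eventually_sum_densityCoord_mul_eq C x f,
    (tendsto_add_atTop_nat j).eventually (eventually_sum_densityCoord_mul_eq C y (f + .const _ ε)),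
    eventually_gt_atTop 0] with m hle hx hy hm
  have hattach := descFactorial_mul_sum_copyCount_mul_le
    (F := fun B => f (densityVector B)) (F' := fun G => (f + .const _ ε) (densityVector G))
    hI hA hV hxy (fun G => add_nonneg (hf _) hε.le)
    (fun B hB G a v hG => hle B (mem_connectedGraphs.1 hB).2 G a v hG)
  rw [hx, hy, Nat.cast_add, le_div_iff₀ (by positivity)]
  refine le_of_eq_of_le ?_ hattach
  field_simp

theorem descFactorial_div_mul_eq_densitySum (C : GraphClassOn) (s m j : ℕ)
    (f : C(DensitySpace, ℝ)) :
    ((m + j + s).descFactorial s / #(C.connectedGraphs (m + j + s)) : ℝ) *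
      ((m + j).descFactorial j * ∑ B ∈ C.connectedGraphs m, f (densityVector B)) =
        C.densitySum (s + j) (m + j + s) f := by
  have hdesc := Nat.descFactorial_mul_descFactorial (n := m + j + s) (k := s) (m := s + j) (by lia)
  rw [Nat.add_sub_cancel, Nat.add_sub_cancel_left] at hdesc
  rw [densitySum, ← hdesc, show m + j + s - (s + j) = m by lia]
  push_cast
  ring

theorem eventually_densitySum_densityCoord_mul_le (hI : ClassIsoInvariant C) (hA : ClassAddable C)
    (hV : V ∈ C.connectedGraphs j) (hxy : Attaches V x y) (hf : ∀ p, 0 ≤ f p) (hε : 0 < ε)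
    (s : ℕ) :
    ∀ᶠ n : ℕ in atTop, (((n - (s + j) : ℕ) : ℝ) / ((n - (s + j) : ℕ) + j)) *
      C.densitySum (s + j) n (densityCoord x * f) ≤
        C.densitySum s n (densityCoord y * (f + .const _ ε)) := by
  filter_upwards [eventually_ge_atTop (s + j), (tendsto_sub_atTop_nat (s + j)).eventually
    (eventually_descFactorial_mul_sum_densityCoord_mul_le hI hA hV hxy hf hε)] with n hn hle
  obtain ⟨m, rfl⟩ : ∃ m, n = m + j + s := ⟨n - (s + j), by lia⟩
  rw [show m + j + s - (s + j) = m by lia] at hle ⊢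
  rw [← descFactorial_div_mul_eq_densitySum, mul_left_comm, densitySum, Nat.add_sub_cancel]
  gcongr

/-- A family of measures which are the limits of the normalized laws of the density vectors along
the ultrafilter `u`. -/
structure IsDensityLimit (C : GraphClassOn) (u : Ultrafilter ℕ) (μ : ℕ → Measure DensitySpace) :
    Prop where
  isFiniteMeasure s : IsFiniteMeasure (μ s)
  tendsto s (f : C(DensitySpace, ℝ)) :
    Tendsto (fun n => C.densitySum s n f) u (𝓝 (∫ p, f p ∂μ s))

theorem exists_isDensityLimit (hI : ClassIsoInvariant C) (hA : ClassAddable C) (h : C (Fin 1) ⊥)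
    {u : Ultrafilter ℕ} (hu : (u : Filter ℕ) ≤ atTop) : ∃ μ, C.IsDensityLimit u μ := by
  have : Nonempty DensitySpace := ⟨densityVector (⊥ : SimpleGraph (Fin 0))⟩
  choose μ hfinite hμ using fun s : ℕ => exists_isFiniteMeasure_tendsto_mul_sum u
    (fun n => C.connectedGraphs (n - s)) (fun _ => densityVector)
    (r := fun n => n.descFactorial s / #(C.connectedGraphs n)) (fun n => by positivity) <| hu <|
      (eventually_ge_atTop (s + 3)).mono fun n hn => connectedRatio_le hI hA h s hn
  exact ⟨μ, hfinite, hμ⟩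

namespace IsDensityLimit

variable {u : Ultrafilter ℕ} {μ : ℕ → Measure DensitySpace}

theorem tendsto_connectedRatio (hμ : C.IsDensityLimit u μ) (s : ℕ) :
    Tendsto (fun n => C.connectedRatio s n) u (𝓝 ((μ s).real Set.univ)) := by
  simpa [densitySum_one] using hμ.tendsto s 1

theorem isProbabilityMeasure (hμ : C.IsDensityLimit u μ) (hI : ClassIsoInvariant C)
    (hA : ClassAddable C) (h : C (Fin 1) ⊥) (hu : (u : Filter ℕ) ≤ atTop) :
    IsProbabilityMeasure (μ 0) := by
  have hone : Tendsto (fun n => C.connectedRatio 0 n) u (𝓝 1) := by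
    refine tendsto_const_nhds.congr' (hu ?_)
    filter_upwards [eventually_ne_atTop 0] with n hn
    exact (connectedRatio_zero hI hA h hn).symm
  have := tendsto_nhds_unique (hμ.tendsto_connectedRatio 0) hone
  exact ⟨by rwa [measureReal_def, ENNReal.toReal_eq_one_iff] at this⟩

theorem integral_densityCoord_mul_le (hμ : C.IsDensityLimit u μ) (hI : ClassIsoInvariant C)
    (hA : ClassAddable C) (hu : (u : Filter ℕ) ≤ atTop) (hV : V ∈ C.connectedGraphs j)
    (hxy : Attaches V x y) (hf : ∀ p, 0 ≤ f p) (s : ℕ) :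
    ∫ p, densityCoord x p * f p ∂μ (s + j) ≤ ∫ p, densityCoord y p * f p ∂μ s := by
  have := hμ.isFiniteMeasure s
  have hε (ε : ℝ) (hε : 0 < ε) : ∫ p, densityCoord x p * f p ∂μ (s + j) ≤
      ∫ p, densityCoord y p * (f p + ε) ∂μ s := by
    have hquot : Tendsto (fun n : ℕ => ((n - (s + j) : ℕ) : ℝ) / ((n - (s + j) : ℕ) + j)) u
        (𝓝 1) :=
      (tendsto_natCast_div_add_atTop (j : ℝ)).comp ((tendsto_sub_atTop_nat (s + j)).mono_left hu)
    have hleft := hquot.mul (hμ.tendsto (s + j) (densityCoord x * f))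
    rw [one_mul] at hleft
    exact le_of_tendsto_of_tendsto hleft (hμ.tendsto s (densityCoord y * (f + .const _ ε)))
      (hu (eventually_densitySum_densityCoord_mul_le hI hA hV hxy hf hε s))
  have hsplit (ε : ℝ) : ∫ p, densityCoord y p * (f p + ε) ∂μ s =
      ∫ p, densityCoord y p * f p ∂μ s + (∫ p, densityCoord y p ∂μ s) * ε := by
    have hadd := integral_add (integrable_continuousMap (densityCoord y * f) (μ s))
      ((integrable_continuousMap (densityCoord y) (μ s)).mul_const ε)
    rw [integral_mul_const] at hadd
    simpa only [ContinuousMap.mul_apply, mul_add] using hadd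
  have hcont : Continuous fun ε : ℝ =>
      ∫ p, densityCoord y p * f p ∂μ s + (∫ p, densityCoord y p ∂μ s) * ε := by fun_prop
  have hlim := (hcont.tendsto 0).mono_left (nhdsWithin_le_nhds (s := Set.Ioi 0))
  rw [mul_zero, add_zero] at hlim
  exact ge_of_tendsto hlim <| eventually_mem_nhdsWithin.mono fun ε hpos => hsplit ε ▸ hε ε hpos

theorem ae_sum_densityCoord_le_one (hμ : C.IsDensityLimit u μ) (hu : (u : Filter ℕ) ≤ atTop) :
    ∀ᵐ p ∂μ 0, ∀ N, ∑ n ∈ Finset.range (N + 1), (1 / n.factorial : ℝ) *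
      ∑ V ∈ C.connectedGraphs n, ∑ v, densityCoord (some ⟨n, V, v⟩) p ≤ 1 := by
  have := hμ.isFiniteMeasure 0
  refine ae_all_iff.2 fun N => ?_
  let g : C(DensitySpace, ℝ) := ∑ n ∈ Finset.range (N + 1), (1 / n.factorial : ℝ) •
    ∑ V ∈ C.connectedGraphs n, ∑ v, densityCoord (some ⟨n, V, v⟩)
  have hg (p : DensitySpace) : g p = ∑ n ∈ Finset.range (N + 1), (1 / n.factorial : ℝ) *
      ∑ V ∈ C.connectedGraphs n, ∑ v, densityCoord (some ⟨n, V, v⟩) p := by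
    simp [g, ContinuousMap.sum_apply]
  have hle : ∀ n, 2 * N < n → ∀ G ∈ C.connectedGraphs n, g (densityVector G) ≤ 1 := by
    intro n hn G hG
    have hG := (mem_connectedGraphs.1 hG).2
    have hdensity : g (densityVector G) = (∑ k ∈ Finset.range (N + 1), (1 / k.factorial : ℝ) *
        ∑ V ∈ C.connectedGraphs k, ∑ v, (#(pendantCopies V v G) : ℝ)) / n := by
      simp_rw [hg, Finset.sum_div, mul_div_assoc, Finset.sum_div]
      refine Finset.sum_congr rfl fun k hk => ?_
      have hk : 2 * k < n := by
        have := Finset.mem_range.1 hk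
        lia
      simp_rw [densityCoord_some_densityVector (R := ⟨k, _, _⟩) hG hk, copyCount]
    rw [hdensity]
    refine div_le_one_of_le₀ ?_ (Nat.cast_nonneg _)
    simpa using sum_inv_factorial_mul_sum_card_pendantCopies_le hG (by simpa using hn)
      C.connectedGraphs
  have hae : ∀ᵐ p ∂μ 0, g p ≤ 1 := by
    refine ae_le_of_tendsto_integral (hμ.tendsto 0) (hu ?_)
    filter_upwards [eventually_gt_atTop (2 * N)] with n hn
    refine mul_eq_zero_of_right _ (Finset.sum_eq_zero fun G hG => max_eq_right ?_)
    exact sub_nonpos.2 (hle n hn G hG)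
  simpa only [hg] using hae

theorem sum_card_graphs_div_factorial_mul_measureReal_le_exp (hμ : C.IsDensityLimit u μ)
    (hI : ClassIsoInvariant C) (hA : ClassAddable C) (h : C (Fin 1) ⊥)
    (hu : (u : Filter ℕ) ≤ atTop) (S : ℕ) :
    ∑ s ∈ Finset.range (S + 1), (#(C.graphs s) / s.factorial : ℝ) * (μ s).real Set.univ ≤
      Real.exp (1 / 2) := by
  have := hμ.isFiniteMeasure
  have := hμ.isProbabilityMeasure hI hA h hu
  exact GraphClassOn.sum_card_graphs_div_factorial_mul_measureReal_le_exp hI hA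
    (bot_mem_connectedGraphs_one h) densityCoord_nonneg rfl
    (fun s j V hV x y hxy f hf => hμ.integral_densityCoord_mul_le hI hA hu hV hxy hf s)
    (hμ.ae_sum_densityCoord_le_one hu) S

end IsDensityLimit

end GraphClassOn

end SubsequentialLimits

section ConnectedProbability

open scoped Finset

theorem sum_finset_card_compl_le {M : Type*} [NonAssocSemiring M] (f : ℕ → ℕ → M) (n S : ℕ) :
    ∑ A : Finset (Fin n) with #Aᶜ ≤ S, f #A #Aᶜ =
      ∑ s ∈ Finset.range (S + 1), n.choose s * f (n - s) s := by
  let g (s : ℕ) : M := if s ≤ S then f (n - s) s else 0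
  calc ∑ A : Finset (Fin n) with #Aᶜ ≤ S, f #A #Aᶜ
      = ∑ A : Finset (Fin n), g #Aᶜ := by
        rw [Finset.sum_filter]
        refine Finset.sum_congr rfl fun A _ => ?_
        have : n - #Aᶜ = #A := by
          simpa using Nat.sub_eq_of_eq_add (Finset.card_add_card_compl A).symm
        simp only [g, this]
    _ = ∑ A ∈ (Finset.univ : Finset (Fin n)).powerset, g #A := by
        rw [Finset.powerset_univ]
        exact Equiv.sum_comp (compl_involutive (α := Finset (Fin n))).toPerm fun A => g #A
    _ = ∑ s ∈ Finset.range (n + 1) with s ≤ S, n.choose s * f (n - s) s := by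
        rw [Finset.sum_powerset_apply_card, Finset.sum_filter]
        simp [g]
    _ = ∑ s ∈ Finset.range (S + 1), n.choose s * f (n - s) s := by
        refine Finset.sum_subset (fun s hs => ?_) fun s hs hsn => ?_
        · have := (Finset.mem_filter.1 hs).2
          exact Finset.mem_range.2 (by lia)
        · have : n < s := by simp at hs hsn; lia
          simp [Nat.choose_eq_zero_of_lt this]

theorem le_liminf_of_forall_ultrafilter {α β : Type*} [ConditionallyCompleteLinearOrder β]
    [TopologicalSpace β] [OrderTopology β] [DenselyOrdered β] {l : Filter α} [l.NeBot]
    {a : α → β} {b d c : β} (ha : ∀ᶠ n in l, a n ∈ Set.Icc b d)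
    (h : ∀ u : Ultrafilter α, (u : Filter α) ≤ l → ∀ x, Tendsto a u (𝓝 x) → c ≤ x) :
    c ≤ liminf a l := by
  have hcobdd : l.IsCoboundedUnder (· ≥ ·) a :=
    IsBoundedUnder.isCoboundedUnder_ge ⟨d, eventually_map.2 (ha.mono fun _ h => h.2)⟩
  refine le_of_forall_lt_imp_le_of_dense fun c' hc' => le_liminf_of_le hcobdd ?_
  by_contra hlow
  have : (l ⊓ 𝓟 {n | ¬c' ≤ a n}).NeBot := frequently_iff_neBot.1 (not_eventually.1 hlow)
  obtain ⟨u, hu⟩ := Ultrafilter.exists_le (l ⊓ 𝓟 {n | ¬c' ≤ a n})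
  obtain ⟨hul, hulow⟩ := le_inf_iff.1 hu
  obtain ⟨x, -, hx⟩ := isCompact_Icc.ultrafilter_le_nhds (u.map a) (le_principal_iff.2 (hul ha))
  have hxc' : x ≤ c' := le_of_tendsto hx <| mem_of_superset (le_principal_iff.1 hulow) fun n hn =>
    (not_le.1 hn).le
  exact (hxc'.trans_lt hc').not_ge (h u hul x hx)

namespace GraphClassOn

variable {C : GraphClassOn} {n : ℕ}

theorem card_graphs_pos (hI : ClassIsoInvariant C) (hA : ClassAddable C) (h : C (Fin 1) ⊥)
    (hn : n ≠ 0) : 0 < #(C.graphs n) :=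
  (card_connectedGraphs_pos hI hA h hn).trans_le <| Finset.card_le_card fun _ hG =>
    mem_graphs.2 (mem_connectedGraphs.1 hG).1

theorem card_connectedGraphs_mul_connectedRatio (hK : 0 < #(C.connectedGraphs n)) (s : ℕ) :
    #(C.connectedGraphs n) * ((#(C.graphs s) / s.factorial : ℝ) * C.connectedRatio s n) =
      n.choose s * (#(C.connectedGraphs (n - s)) * #(C.graphs s)) := by
  rw [connectedRatio, Nat.descFactorial_eq_factorial_mul_choose]
  have := Nat.factorial_pos s
  push_cast
  field_simp

theorem card_graphs_mul_le (hI : ClassIsoInvariant C) (hA : ClassAddable C)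
    (h : C (Fin 1) ⊥) (hn : n ≠ 0) (S : ℕ) :
    #(C.graphs n) * (1 - 2 / (S + 1) : ℝ) ≤ #(C.connectedGraphs n) *
      ∑ s ∈ Finset.range (S + 1), (#(C.graphs s) / s.factorial : ℝ) * C.connectedRatio s n := by
  have hlarge : (#{G ∈ C.graphs n | ∃ x, #(componentFinset G x)ᶜ ≤ S} : ℝ) ≤
      #(C.connectedGraphs n) * ∑ s ∈ Finset.range (S + 1),
        (#(C.graphs s) / s.factorial : ℝ) * C.connectedRatio s n := by
    simp_rw [Finset.mul_sum,
      card_connectedGraphs_mul_connectedRatio (card_connectedGraphs_pos hI hA h hn)]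
    rw [← sum_finset_card_compl_le fun k s => (#(C.connectedGraphs k) * #(C.graphs s) : ℝ)]
    exact_mod_cast card_filter_exists_card_componentFinset_compl_le hI hA.1 n S
  have hsmall : (#{G ∈ C.graphs n | ∀ x, S < #(componentFinset G x)ᶜ} : ℝ) ≤
      #(C.graphs n) * (2 / (S + 1)) := by
    rw [← mul_div_assoc, le_div_iff₀ (by positivity), mul_comm (#(C.graphs n) : ℝ)]
    exact_mod_cast card_filter_lt_card_componentFinset_compl_mul_le hA.2 hn S
  have hsplit : (#{G ∈ C.graphs n | ∃ x, #(componentFinset G x)ᶜ ≤ S} : ℝ) +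
      #{G ∈ C.graphs n | ∀ x, S < #(componentFinset G x)ᶜ} = #(C.graphs n) := by
    have := Finset.card_filter_add_card_filter_not (s := C.graphs n)
      fun G => ∃ x, #(componentFinset G x)ᶜ ≤ S
    simp only [not_exists, not_le] at this
    exact_mod_cast this
  linarith

theorem classProb_connected_mem_Icc (C : GraphClassOn) (n : ℕ) :
    classProb C n (fun G => G.Connected) ∈ Set.Icc 0 1 := by
  rw [classProb_connected_eq]
  refine ⟨by positivity, div_le_one_of_le₀ ?_ (Nat.cast_nonneg _)⟩
  exact_mod_cast Finset.card_le_card fun G hG => mem_graphs.2 (mem_connectedGraphs.1 hG).1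

theorem le_classProb_connected_mul (hI : ClassIsoInvariant C) (hA : ClassAddable C)
    (h : C (Fin 1) ⊥) (hn : n ≠ 0) (S : ℕ) :
    (1 - 2 / (S + 1) : ℝ) ≤ classProb C n (fun G => G.Connected) *
      ∑ s ∈ Finset.range (S + 1), (#(C.graphs s) / s.factorial : ℝ) * C.connectedRatio s n := by
  have hpos : (0 : ℝ) < #(C.graphs n) := by exact_mod_cast card_graphs_pos hI hA h hn
  rw [classProb_connected_eq, div_mul_eq_mul_div, le_div_iff₀ hpos, mul_comm]
  exact card_graphs_mul_le hI hA h hn S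

theorem exp_neg_le_of_tendsto_classProb_connected (hI : ClassIsoInvariant C) (hA : ClassAddable C)
    (h : C (Fin 1) ⊥) {u : Ultrafilter ℕ} (hu : (u : Filter ℕ) ≤ atTop) {x : ℝ}
    (hx : Tendsto (fun n => classProb C n fun G => G.Connected) u (𝓝 x)) :
    Real.exp (-(1 / 2)) ≤ x := by
  obtain ⟨μ, hμ⟩ := exists_isDensityLimit hI hA h hu
  have hx₀ : 0 ≤ x := ge_of_tendsto' hx fun n => (classProb_connected_mem_Icc C n).1
  have hS (S : ℕ) : (1 - 2 / (S + 1) : ℝ) ≤ x * Real.exp (1 / 2) := by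
    have hlim := hx.mul (tendsto_finsetSum (Finset.range (S + 1)) fun s _ =>
      (hμ.tendsto_connectedRatio s).const_mul (#(C.graphs s) / s.factorial : ℝ))
    refine (ge_of_tendsto hlim (hu ?_)).trans (mul_le_mul_of_nonneg_left
      (hμ.sum_card_graphs_div_factorial_mul_measureReal_le_exp hI hA h hu S) hx₀)
    filter_upwards [eventually_ne_atTop 0] with n hn
    exact le_classProb_connected_mul hI hA h hn S
  have hone : Tendsto (fun S : ℕ => (1 - 2 / (S + 1) : ℝ)) atTop (𝓝 1) := by
    have := (tendsto_one_div_add_atTop_nhds_zero_nat (𝕜 := ℝ)).const_mul 2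
    simpa [div_eq_mul_inv] using this.const_sub 1
  rw [Real.exp_neg, inv_le_iff_one_le_mul₀ (Real.exp_pos _)]
  exact le_of_tendsto' hone hS

end GraphClassOn

end ConnectedProbability

end

theorem connected_probability_liminf_general (C : GraphClassOn) (hIso : ClassIsoInvariant C)
    (hAdd : ClassAddable C) (hone : C (Fin 1) ⊥) :
    Real.exp (-(1 / 2 : ℝ)) ≤
      Filter.liminf (fun n : ℕ => classProb C n (fun G => G.Connected)) atTop :=
  le_liminf_of_forall_ultrafilter (.of_forall C.classProb_connected_mem_Icc) fun _ hu _ hx =>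
    GraphClassOn.exp_neg_le_of_tendsto_classProb_connected hIso hAdd hone hu hx

/-- A random graph from a small addable class is connected with
probability at least `1/√e - o(1)`. -/
theorem connected_probability_liminf
    (C : GraphClassOn) (hIso : ClassIsoInvariant C) (hAdd : ClassAddable C)
    (hSmall : ClassSmall C)
    (hne : ∀ n : ℕ, 1 ≤ n → ∃ G : SimpleGraph (Fin n), C (Fin n) G) :
    Real.exp (-(1 / 2 : ℝ)) ≤
      Filter.liminf (fun n : ℕ => classProb C n (fun G => G.Connected)) atTop := by
  obtain ⟨G, hG⟩ := hne 1 le_rfl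
  exact connected_probability_liminf_general C hIso hAdd (Subsingleton.elim G ⊥ ▸ hG)
end

section
/- Let t_n be the number of connected acyclic simple graphs (trees) on the vertex set Fin n and let f_n be the number of acyclic simple graphs (forests) on the vertex set Fin n. Then t_n / f_n converges to e^{−1/2} as n → ∞; that is, the limiting probability that a uniformly random forest on Fin n is connected equals e^{−1/2}. -/
open Filter Topology FirstOrder

/-!
Delete a marked vertex of a graph and mark its neighbours instead. Under this operation both "a
forest whose marked vertices lie in distinct trees" and "a forest in which every tree contains
exactly one marked vertex" turn into the same condition on the smaller graph, so in both cases the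
number `N n k` of graphs on `n` vertices, `k` of them marked, satisfies
`N (n + 1) (k + 1) = ∑ a, (n - k).choose a * N n (k + a)`. By the addition theorem
`pₙ(x + 1) = ∑ a, n.choose a * pₙ₋ₐ(x)`, every Appell sequence `p` gives the solution
`N n k = pₙ₋ₖ(n + r)`, and the value of `N` at `k = 0` selects the sequence:

* rooted forests: `r = 0` and `pₙ = Xⁿ - n Xⁿ⁻¹`, whence Cayley's formula `tₙ = nⁿ⁻²`;
* forests: `r = 1` and `pₙ = Heₙ - n Heₙ₋₁`, whence Takács' formula
  `fₙ = Heₙ(n + 1) - n Heₙ₋₁(n + 1)`, where `Heₙ` are the Hermite polynomials.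

The two terms of Takács' formula cancel to leading order, but by the three-term recurrence
`fₙ = 2 Heₙ₋₂(n + 1) - (n - 2) Heₙ₋₃(n + 1)`. Since `Heₘ(x) / xᵐ → exp (-1 / 2)` when `m / x → 1`,
this gives `fₙ / nⁿ⁻² → (2 - 1) exp (-1 / 2) · exp 1 = exp (1 / 2)`.
-/

section VertexDeletion
universe u
variable {V W : Type u}

/-- The graph obtained from `H` by adding a vertex `none` with neighbourhood `A`. -/
def adjoinVertex (H : SimpleGraph W) (A : Set W) : SimpleGraph (Option W) where
  Adj
    | none, none => False
    | none, some w => w ∈ A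
    | some w, none => w ∈ A
    | some v, some w => H.Adj v w
  symm := ⟨by rintro (_ | v) (_ | w) h; exacts [h, h, h, SimpleGraph.Adj.symm (G := H) h]⟩
  loopless := ⟨by rintro (_ | v) h; exacts [h, H.irrefl h]⟩

lemma adjoinVertex_adj_none_some {H : SimpleGraph W} {A : Set W} {w : W} :
    (adjoinVertex H A).Adj none (some w) ↔ w ∈ A := Iff.rfl

lemma mem_of_reachable_of_forall_adj {G : SimpleGraph V} {T : Set V} {u v : V}
    (hT : ∀ x ∈ T, ∀ y, G.Adj x y → y ∈ T) (huv : G.Reachable u v) (hu : u ∈ T) : v ∈ T := by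
  rw [SimpleGraph.reachable_iff_reflTransGen] at huv
  induction huv with
  | refl => exact hu
  | tail _ hadj ih => exact hT _ ih _ hadj

lemma reachable_adjoinVertex {H : SimpleGraph W} {v w : W} (h : H.Reachable v w)
    (A : Set W) : (adjoinVertex H A).Reachable (some v) (some w) :=
  h.map (⟨some, id⟩ : H →g adjoinVertex H A)

lemma adjoinVertex_reachable_none_some_iff {H : SimpleGraph W} {A : Set W} {w : W} :
    (adjoinVertex H A).Reachable none (some w) ↔ ∃ a ∈ A, H.Reachable a w := by
  constructor
  · intro h
    let T : Set (Option W) := {x | x.elim True fun v => ∃ a ∈ A, H.Reachable a v}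
    refine mem_of_reachable_of_forall_adj (T := T) ?_ h trivial
    rintro (_ | v) hv (_ | y) hadj
    · trivial
    · exact ⟨y, hadj, .rfl⟩
    · trivial
    · obtain ⟨a, ha, hav⟩ := hv
      exact ⟨a, ha, hav.trans (SimpleGraph.Adj.reachable hadj)⟩
  · rintro ⟨a, ha, haw⟩
    exact (adjoinVertex_adj_none_some.2 ha).reachable.trans (reachable_adjoinVertex haw A)

lemma adjoinVertex_reachable_some_some_iff {H : SimpleGraph W} {A : Set W} {v w : W} :
    (adjoinVertex H A).Reachable (some v) (some w) ↔
      H.Reachable v w ∨ (∃ a ∈ A, H.Reachable a v) ∧ ∃ a ∈ A, H.Reachable a w := by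
  simp only [← adjoinVertex_reachable_none_some_iff]
  constructor
  · intro h
    by_cases hv : (adjoinVertex H A).Reachable none (some v)
    · exact .inr ⟨hv, hv.trans h⟩
    left
    let T : Set (Option W) := {x | x.elim False (H.Reachable v)}
    refine mem_of_reachable_of_forall_adj (T := T) ?_ h .rfl
    rintro (_ | x) hx (_ | y) hadj
    · exact hx
    · exact hx.elim
    · exact hv (adjoinVertex_reachable_none_some_iff.2 ⟨x, hadj, hx.symm⟩)
    · exact hx.trans (SimpleGraph.Adj.reachable hadj)
  · rintro (h | ⟨hv, hw⟩)
    · exact reachable_adjoinVertex h A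
    · exact hv.symm.trans hw

/-- The vertices of `S` lie in pairwise distinct components of `G`. -/
def IsSeparated (G : SimpleGraph V) (S : Set V) : Prop :=
  S.Pairwise fun u v => ¬G.Reachable u v

lemma adjoinVertex_deleteEdges_none_some (H : SimpleGraph W) (A : Set W) (a : W) :
    (adjoinVertex H A).deleteEdges {s(none, some a)} = adjoinVertex H (A \ {a}) := by
  ext (_ | x) (_ | y) <;> simp [adjoinVertex, SimpleGraph.deleteEdges_adj]

lemma adjoinVertex_deleteEdges_some_some (H : SimpleGraph W) (A : Set W) (v w : W) :
    (adjoinVertex H A).deleteEdges {s(some v, some w)} =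
      adjoinVertex (H.deleteEdges {s(v, w)}) A := by
  ext (_ | x) (_ | y) <;> simp [adjoinVertex, SimpleGraph.deleteEdges_adj]

lemma isBridge_adjoinVertex_none_some_iff {H : SimpleGraph W} {A : Set W} {a : W} :
    (adjoinVertex H A).IsBridge s(none, some a) ↔ ∀ b ∈ A, b ≠ a → ¬H.Reachable b a := by
  rw [SimpleGraph.isBridge_iff, adjoinVertex_deleteEdges_none_some,
    adjoinVertex_reachable_none_some_iff]
  simp only [Set.mem_sdiff, Set.mem_singleton_iff, not_exists, not_and, and_imp, ne_eq]

lemma IsSeparated.isBridge_adjoinVertex_some_some {H : SimpleGraph W} {A : Set W} {v w : W}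
    (hA : IsSeparated H A) (hadj : H.Adj v w) (hvw : H.IsBridge s(v, w)) :
    (adjoinVertex H A).IsBridge s(some v, some w) := by
  rw [SimpleGraph.isBridge_iff] at hvw ⊢
  rw [adjoinVertex_deleteEdges_some_some, adjoinVertex_reachable_some_some_iff]
  rintro (h | ⟨⟨a, ha, hav⟩, b, hb, hbw⟩)
  · exact hvw h
  · have hle := H.deleteEdges_le {s(v, w)}
    have hab : a = b := hA.eq ha hb
      (not_not.2 (((hav.mono hle).trans hadj.reachable).trans (hbw.mono hle).symm))
    exact hvw (hav.symm.trans (hab ▸ hbw))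

lemma isAcyclic_adjoinVertex_iff {H : SimpleGraph W} {A : Set W} :
    (adjoinVertex H A).IsAcyclic ↔ H.IsAcyclic ∧ IsSeparated H A := by
  constructor
  · intro h
    refine ⟨h.comap ⟨some, id⟩ (Option.some_injective W), fun b hb a ha hba => ?_⟩
    exact isBridge_adjoinVertex_none_some_iff.1
      (SimpleGraph.isAcyclic_iff_forall_adj_isBridge.1 h (adjoinVertex_adj_none_some.2 ha)) b hb hba
  · rintro ⟨hH, hA⟩
    have hbridge {a : W} (ha : a ∈ A) : (adjoinVertex H A).IsBridge s(none, some a) :=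
      isBridge_adjoinVertex_none_some_iff.2 fun b hb hba => hA hb ha hba
    rw [SimpleGraph.isAcyclic_iff_forall_adj_isBridge]
    rintro (_ | v) (_ | w) hadj
    · exact hadj.elim
    · exact hbridge hadj
    · exact Sym2.eq_swap ▸ hbridge hadj
    · exact hA.isBridge_adjoinVertex_some_some hadj
        (SimpleGraph.isAcyclic_iff_forall_adj_isBridge.1 hH hadj)

lemma isSeparated_union_iff {G : SimpleGraph V} {S T : Set V} :
    Disjoint S T ∧ IsSeparated G (S ∪ T) ↔
      IsSeparated G S ∧ IsSeparated G T ∧ ∀ u ∈ S, ∀ v ∈ T, ¬G.Reachable u v := by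
  rw [IsSeparated, Set.pairwise_union, Set.disjoint_left]
  constructor
  · rintro ⟨hd, hS, hT, hST⟩
    exact ⟨hS, hT, fun u hu v hv => (hST u hu v hv (by rintro rfl; exact hd hu hv)).1⟩
  · rintro ⟨hS, hT, hST⟩
    exact ⟨fun u hu hv => hST u hu u hv .rfl, hS, hT,
      fun u hu v hv _ => ⟨hST u hu v hv, fun h => hST u hu v hv h.symm⟩⟩

lemma isSeparated_adjoinVertex_iff {H : SimpleGraph W} {A S : Set W} :
    IsSeparated (adjoinVertex H A) (insert none (some '' S)) ↔
      IsSeparated H S ∧ ∀ a ∈ A, ∀ s ∈ S, ¬H.Reachable a s := by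
  have hcone : (∀ s ∈ S, ¬(adjoinVertex H A).Reachable none (some s)) ↔
      ∀ a ∈ A, ∀ s ∈ S, ¬H.Reachable a s := by
    simp only [adjoinVertex_reachable_none_some_iff, not_exists, not_and]
    exact ⟨fun h a ha s hs => h s hs a ha, fun h s hs a ha => h a ha s hs⟩
  rw [← hcone, IsSeparated, IsSeparated, Set.pairwise_insert,
    (Option.some_injective W).injOn.pairwise_image]
  simp only [Set.forall_mem_image, ne_eq, reduceCtorEq, not_false_eq_true, forall_const,
    SimpleGraph.reachable_comm (v := none), and_self]
  refine and_congr_left fun hS => ?_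
  refine ⟨fun h s hs t ht hst hr => ?_, fun h s hs t ht hst hr => ?_⟩
  · exact h hs ht hst (reachable_adjoinVertex hr A)
  · rcases adjoinVertex_reachable_some_some_iff.1 hr with hr | ⟨hs', -⟩
    · exact h hs ht hst hr
    · exact hS hs (adjoinVertex_reachable_none_some_iff.2 hs')

/-- A property of graphs with marked vertices that can be decided by deleting a marked vertex and
marking its neighbours instead, all of which must have been unmarked. -/
structure IsDeletionRecursive (P : ∀ ⦃V : Type u⦄, SimpleGraph V → Set V → Prop) : Prop where
  of_isEmpty : ∀ ⦃V : Type u⦄ [IsEmpty V] (G : SimpleGraph V), P G ∅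
  map_iso : ∀ ⦃V W : Type u⦄ ⦃G : SimpleGraph V⦄ ⦃H : SimpleGraph W⦄ (f : G ≃g H) ⦃S : Set V⦄,
    P G S → P H (f '' S)
  adjoinVertex_iff : ∀ ⦃W : Type u⦄ (H : SimpleGraph W) (A S : Set W),
    P (adjoinVertex H A) (insert none (some '' S)) ↔ Disjoint A S ∧ P H (A ∪ S)

/-- `G` is a forest and the vertices of `S` lie in pairwise distinct trees of it. -/
def IsSeparatedForest ⦃V : Type u⦄ (G : SimpleGraph V) (S : Set V) : Prop :=
  G.IsAcyclic ∧ IsSeparated G S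

/-- `G` is a forest with set of roots `S`: every tree contains exactly one vertex of `S`. -/
def IsRootedForest ⦃V : Type u⦄ (G : SimpleGraph V) (S : Set V) : Prop :=
  IsSeparatedForest G S ∧ ∀ v, ∃ s ∈ S, G.Reachable s v

lemma isDeletionRecursive_isSeparatedForest : IsDeletionRecursive.{u} IsSeparatedForest where
  of_isEmpty _ _ _ := ⟨.of_subsingleton, Set.pairwise_empty _⟩
  map_iso _ _ _ _ f _ h := by
    refine ⟨f.isAcyclic_iff.1 h.1, f.injective.injOn.pairwise_image.2 ?_⟩
    exact h.2.imp fun _ _ huv h => huv (SimpleGraph.Iso.reachable_iff.1 h)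
  adjoinVertex_iff _ H A S := by
    rw [IsSeparatedForest, IsSeparatedForest, isAcyclic_adjoinVertex_iff,
      isSeparated_adjoinVertex_iff, and_assoc, ← isSeparated_union_iff]
    exact and_left_comm

lemma isDeletionRecursive_isRootedForest : IsDeletionRecursive.{u} IsRootedForest where
  of_isEmpty _ _ G := ⟨isDeletionRecursive_isSeparatedForest.of_isEmpty G, isEmptyElim⟩
  map_iso _ _ _ _ f _ h := by
    refine ⟨isDeletionRecursive_isSeparatedForest.map_iso f h.1, f.surjective.forall.2 fun v => ?_⟩
    obtain ⟨s, hs, hsv⟩ := h.2 v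
    exact ⟨f s, Set.mem_image_of_mem f hs, SimpleGraph.Iso.reachable_iff.2 hsv⟩
  adjoinVertex_iff _ H A S := by
    rw [IsRootedForest, isDeletionRecursive_isSeparatedForest.adjoinVertex_iff, and_assoc,
      IsRootedForest]
    refine and_congr_right fun _ => and_congr_right fun _ => ?_
    simp only [Option.forall, Set.exists_mem_insert, Set.exists_mem_image,
      SimpleGraph.Reachable.refl, true_or, true_and, adjoinVertex_reachable_none_some_iff,
      adjoinVertex_reachable_some_some_iff, Set.mem_union, or_and_right, exists_or]
    refine forall_congr' fun v => ⟨?_, ?_⟩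
    · rintro (hv | ⟨s, hs, hsv | ⟨-, hv⟩⟩)
      exacts [.inl hv, .inr ⟨s, hs, hsv⟩, .inl hv]
    · rintro (hv | ⟨s, hs, hsv⟩)
      exacts [.inl hv, .inr ⟨s, hs, .inl hsv⟩]

/-- A graph on `Option W` amounts to the neighbourhood of `none` and the graph induced on `W`. -/
def adjoinVertexEquiv (W : Type u) : (Set W × SimpleGraph W) ≃ SimpleGraph (Option W) where
  toFun p := adjoinVertex p.2 p.1
  invFun G := ({w | G.Adj none (some w)}, G.comap some)
  left_inv _ := rfl
  right_inv G := by ext (_ | v) (_ | w) <;> simp [adjoinVertex, G.adj_comm]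

namespace IsDeletionRecursive
variable {P : ∀ ⦃V : Type u⦄, SimpleGraph V → Set V → Prop}

lemma map_iso_iff (hP : IsDeletionRecursive P) {G : SimpleGraph V} {H : SimpleGraph W}
    (f : G ≃g H) {S : Set V} : P H (f '' S) ↔ P G S :=
  ⟨fun h => by simpa [Set.image_image] using hP.map_iso f.symm h, fun h => hP.map_iso f h⟩

lemma card_image_equiv (hP : IsDeletionRecursive P) (e : V ≃ W) (S : Set V) :
    Nat.card {G : SimpleGraph W // P G (e '' S)} = Nat.card {G : SimpleGraph V // P G S} :=
  Nat.card_congr (e.simpleGraph.subtypeEquiv fun G =>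
    (hP.map_iso_iff (SimpleGraph.Iso.comap e.symm G).symm).symm).symm

lemma card_insert_none [Fintype W] [DecidableEq W] (hP : IsDeletionRecursive P) (S : Finset W) :
    Nat.card {G : SimpleGraph (Option W) // P G (insert none (some '' (S : Set W)))} =
      ∑ A ∈ Sᶜ.powerset, Nat.card {H : SimpleGraph W // P H (A ∪ S)} := by
  let e : Finset W × SimpleGraph W ≃ SimpleGraph (Option W) :=
    (Fintype.finsetEquivSet.prodCongr (.refl _)).trans (adjoinVertexEquiv W)
  have he (p : Finset W × SimpleGraph W) :
      (Disjoint p.1 S ∧ P p.2 (p.1 ∪ S)) ↔ P (e p) (insert none (some '' (S : Set W))) := by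
    rw [← Finset.disjoint_coe]
    exact (hP.adjoinVertex_iff p.2 p.1 S).symm
  calc
    _ = Nat.card {p : Finset W × SimpleGraph W // Disjoint p.1 S ∧ P p.2 (p.1 ∪ S)} :=
      Nat.card_congr (e.subtypeEquiv he).symm
    _ = ∑ A : Finset W, Nat.card {H : SimpleGraph W // Disjoint A S ∧ P H (A ∪ S)} := by
      rw [Nat.card_congr (Equiv.subtypeProdEquivSigmaSubtype
        fun (A : Finset W) (H : SimpleGraph W) => Disjoint A S ∧ P H (A ∪ S)), Nat.card_sigma]
    _ = ∑ A ∈ Sᶜ.powerset, Nat.card {H : SimpleGraph W // Disjoint A S ∧ P H (A ∪ S)} := by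
      refine (Finset.sum_subset (Finset.subset_univ _) fun A _ hA => ?_).symm
      simp only [Finset.mem_powerset, Finset.subset_compl_iff_disjoint_right] at hA
      simp [hA]
    _ = _ := Finset.sum_congr rfl fun A hA => by
      simp only [Finset.mem_powerset, Finset.subset_compl_iff_disjoint_right] at hA
      simp only [hA, true_and]

end IsDeletionRecursive

/-- The recurrence satisfied by the number `N n k` of graphs on `n` vertices, `k` of them marked,
with a deletion-recursive property: the sum ranges over the number `a` of unmarked neighbours of
the deleted vertex. A graph without marks is counted by marking one fixed vertex, with weight
`c`. -/
structure MarkedRecurrence {R : Type*} [Semiring R] (c : R) (N : ℕ → ℕ → R) : Prop where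
  zero_zero : N 0 0 = 1
  succ_zero (n : ℕ) : N (n + 1) 0 = c * N (n + 1) 1
  succ_succ ⦃n k : ℕ⦄ (hk : k ≤ n) :
    N (n + 1) (k + 1) = ∑ a ∈ Finset.range (n - k + 1), (n - k).choose a * N n (k + a)

namespace IsDeletionRecursive
variable {P : ∀ ⦃V : Type u⦄, SimpleGraph V → Set V → Prop} {R : Type*} [Semiring R]
  {c : R} {N : ℕ → ℕ → R}

lemma card_insert_none_eq [Fintype W] (hP : IsDeletionRecursive P) (hN : MarkedRecurrence c N)
    (ih : ∀ S : Finset W, (Nat.card {H : SimpleGraph W // P H S} : R) = N (Fintype.card W) S.card)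
    (S : Finset W) :
    (Nat.card {G : SimpleGraph (Option W) // P G (insert none (some '' (S : Set W)))} : R) =
      N (Fintype.card W + 1) (S.card + 1) := by
  classical
  have hcard : ∀ A ∈ Sᶜ.powerset, (Nat.card {H : SimpleGraph W // P H (A ∪ S)} : R) =
      N (Fintype.card W) (S.card + A.card) := fun A hA => by
    have hd : Disjoint A S := Finset.subset_compl_iff_disjoint_right.1 (Finset.mem_powerset.1 hA)
    rw [← Finset.coe_union, ih, Finset.card_union_of_disjoint hd, add_comm]
  rw [hP.card_insert_none, Nat.cast_sum, Finset.sum_congr rfl hcard,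
    Finset.sum_powerset_apply_card (fun a => N (Fintype.card W) (S.card + a)),
    Finset.card_compl, hN.succ_succ (Finset.card_le_univ S)]
  simp only [nsmul_eq_mul]

theorem card_eq (hP : IsDeletionRecursive P) (hN : MarkedRecurrence c N)
    (hempty : ∀ ⦃V : Type u⦄ [Finite V] (v : V), (Nat.card {G : SimpleGraph V // P G ∅} : R) =
      c * Nat.card {G : SimpleGraph V // P G {v}})
    (V : Type u) [Fintype V] (S : Finset V) :
    (Nat.card {G : SimpleGraph V // P G S} : R) = N (Fintype.card V) S.card := by
  classical
  induction hn : Fintype.card V generalizing V with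
  | zero =>
    have := Fintype.card_eq_zero_iff.1 hn
    have hall : ∀ G : SimpleGraph V, P G ∅ := fun G => hP.of_isEmpty G
    simp [Finset.eq_empty_of_isEmpty S, hall, hN.zero_zero]
  | succ n ih =>
    have hmarked (S : Finset V) (s : V) (hs : s ∈ S) :
        (Nat.card {G : SimpleGraph V // P G S} : R) = N (n + 1) S.card := by
      let e := Equiv.optionSubtypeNe s
      let S' : Finset {v // v ≠ s} := S.subtype (· ≠ s)
      have hn' : Fintype.card {v // v ≠ s} = n := by
        simp [hn]
      have hS' : insert s (S'.map (.subtype _)) = S := by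
        rw [Finset.subtype_map, Finset.filter_ne', Finset.insert_erase hs]
      have hcard : S'.card + 1 = S.card := by
        conv_rhs => rw [← hS', Finset.card_insert_of_notMem (by simp), Finset.card_map]
      have himage : e '' insert none (some '' (S' : Set {v // v ≠ s})) = S := by
        rw [← hS']
        simp [e, Set.image_insert_eq, Set.image_image]
      rw [← himage, hP.card_image_equiv, ← hcard, ← hn']
      exact hP.card_insert_none_eq hN (fun T => by rw [ih _ T hn', hn']) S'
    obtain rfl | ⟨s, hs⟩ := S.eq_empty_or_nonempty
    · obtain ⟨v⟩ : Nonempty V := Fintype.card_pos_iff.1 (by omega)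
      have := hmarked {v} v (Finset.mem_singleton_self v)
      rw [Finset.coe_singleton, Finset.card_singleton] at this
      rw [Finset.coe_empty, Finset.card_empty, hempty v, hN.succ_zero, this]
    · exact hmarked S s hs

end IsDeletionRecursive

end VertexDeletion

section Appell
open Polynomial
variable {R : Type*} [CommRing R]

/-- Appell sequences of polynomials, normalized like `Xⁿ`; for `n = 0` the condition says that
`p 0` has derivative zero, whatever `p (0 - 1) = p 0` is. -/
def IsAppell (p : ℕ → R[X]) : Prop :=
  ∀ n, derivative (p n) = n * p (n - 1)

lemma isAppell_X_pow : IsAppell fun n => (X ^ n : R[X]) := fun n => by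
  rw [derivative_X_pow, C_eq_natCast]

lemma isAppell_hermite : IsAppell hermite := fun n => by
  induction n with
  | zero => simp
  | succ n ih =>
    rw [hermite_succ, derivative_sub, derivative_mul, derivative_X, ih, Nat.add_sub_cancel]
    rcases n with _ | n
    · simp
    · simp only [derivative_mul, derivative_natCast, Nat.add_sub_cancel, hermite_succ n]
      push_cast
      ring

namespace IsAppell
variable {p : ℕ → R[X]}

lemma map {S : Type*} [CommRing S] (hp : IsAppell p) (f : R →+* S) :
    IsAppell fun n => (p n).map f := fun n => by
  rw [derivative_map, hp, Polynomial.map_mul, Polynomial.map_natCast]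

lemma sub_natCast_mul_pred (hp : IsAppell p) :
    IsAppell fun n => p n - (n : R[X]) * p (n - 1) := fun n => by
  simp only [derivative_sub, derivative_mul, derivative_natCast, hp n, hp (n - 1)]
  ring

lemma iterate_derivative (hp : IsAppell p) (n a : ℕ) :
    derivative^[a] (p n) = n.descFactorial a * p (n - a) := by
  induction a with
  | zero => simp
  | succ a ih =>
    rw [Function.iterate_succ_apply', ih, derivative_mul, derivative_natCast, hp,
      Nat.descFactorial_succ, Nat.sub_sub]
    push_cast
    ring

variable [IsAddTorsionFree R]

lemma taylor_coeff (hp : IsAppell p) (x : R) (n a : ℕ) :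
    (taylor x (p n)).coeff a = n.choose a * (p (n - a)).eval x := by
  have h := congrArg (eval x) (hp.iterate_derivative n a)
  rw [← factorial_smul_hasseDeriv, Nat.descFactorial_eq_factorial_mul_choose] at h
  rw [Polynomial.taylor_coeff]
  refine nsmul_right_injective (Nat.factorial_ne_zero a) ?_
  simpa [mul_assoc] using h

lemma eval_add (hp : IsAppell p) (x y : R) (n : ℕ) :
    (p n).eval (x + y) =
      ∑ a ∈ Finset.range (n + 1), n.choose a * y ^ a * (p (n - a)).eval x := by
  have hdeg : (taylor x (p n)).natDegree < n + 1 :=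
    Nat.lt_succ_of_le <| natDegree_le_iff_coeff_eq_zero.2 fun a ha => by
      simp [hp.taylor_coeff, Nat.choose_eq_zero_of_lt ha]
  rw [add_comm x, ← taylor_eval, eval_eq_sum_range' hdeg]
  exact Finset.sum_congr rfl fun a _ => by rw [hp.taylor_coeff]; ring

theorem markedRecurrence (hp : IsAppell p) {r c : R} (hzero : (p 0).eval r = 1)
    (hsucc : ∀ n : ℕ, (p (n + 1)).eval (n + 1 + r) = c * (p n).eval (n + 1 + r)) :
    MarkedRecurrence c fun n k => (p (n - k)).eval (n + r) where
  zero_zero := by simpa using hzero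
  succ_zero n := by simpa using hsucc n
  succ_succ n k _ := by
    rw [Nat.add_sub_add_right, Nat.cast_succ, add_right_comm, hp.eval_add]
    simp only [one_pow, mul_one, Nat.sub_sub]

end IsAppell

lemma markedRecurrence_pow :
    MarkedRecurrence 0 fun n k => (n : ℤ) ^ (n - k) - (n - k : ℕ) * (n : ℤ) ^ (n - k - 1) := by
  have hsucc (n : ℕ) : ((n : ℤ) + 1) ^ (n + 1) - (n + 1 : ℕ) * ((n : ℤ) + 1) ^ n = 0 := by
    push_cast
    ring
  simpa using isAppell_X_pow.sub_natCast_mul_pred.markedRecurrence (R := ℤ) (r := 0) (c := 0)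
    (by simp) (by simpa using hsucc)

lemma aeval_hermite_succ (x : R) (n : ℕ) :
    aeval x (hermite (n + 1)) = x * aeval x (hermite n) - n * aeval x (hermite (n - 1)) := by
  rw [hermite_succ, isAppell_hermite]
  simp only [map_sub, map_mul, aeval_X, map_natCast]

lemma markedRecurrence_hermite [IsAddTorsionFree R] :
    MarkedRecurrence (1 : R) fun n k => aeval (n + 1 : R) (hermite (n - k)) -
      (n - k : ℕ) * aeval (n + 1 : R) (hermite (n - k - 1)) := by
  have hsucc (n : ℕ) (x : R) (hx : x = n + 1 + 1) :
      aeval x (hermite (n + 1)) - (n + 1 : ℕ) * aeval x (hermite n) =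
        aeval x (hermite n) - n * aeval x (hermite (n - 1)) := by
    rw [aeval_hermite_succ, hx]
    push_cast
    ring
  have haeval (x : R) (n : ℕ) :
      ((hermite n).map (Int.castRingHom R)).eval x = aeval x (hermite n) :=
    eval_map_algebraMap ..
  simpa [haeval] using
    (isAppell_hermite.map (Int.castRingHom R)).sub_natCast_mul_pred.markedRecurrence
      (r := 1) (c := 1) (by simp) (fun n => by simpa [haeval, -hermite_succ] using hsucc n _ rfl)

end Appell

section Asymptotics
open Polynomial
open scoped Nat

lemma succ_descFactorial_succ_eq_add (n k : ℕ) :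
    (n + 1).descFactorial (k + 1) = n.descFactorial (k + 1) + (k + 1) * n.descFactorial k := by
  simp only [Nat.descFactorial_eq_factorial_mul_choose, Nat.choose_succ_succ', Nat.factorial_succ]
  ring

lemma hasSum_aeval_hermite_div_pow {x : ℝ} (hx : x ≠ 0) (m : ℕ) :
    HasSum (fun j : ℕ => (-1 / 2) ^ j / j ! * (m.descFactorial (2 * j) / x ^ (2 * j)))
      (aeval x (hermite m) / x ^ m) := by
  have hinit {m : ℕ} (hm : m < 2) : HasSum (fun j : ℕ =>
      (-1 / 2) ^ j / j ! * (m.descFactorial (2 * j) / x ^ (2 * j))) 1 := by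
    refine (hasSum_ite_eq 0 1).congr_fun fun j => ?_
    rcases j with _ | j
    · simp
    · simp [Nat.descFactorial_eq_zero_iff_lt.2 (show m < 2 * (j + 1) by omega)]
  induction m using Nat.twoStepInduction with
  | zero => simpa using hinit zero_lt_two
  | one => simpa [hx] using hinit one_lt_two
  | more m ih ih' =>
    rw [← hasSum_nat_add_iff' 1] at ih' ⊢
    convert ih'.sub (ih.mul_left ((m + 1) / x ^ 2)) using 1
    · funext j
      rw [Nat.mul_succ, succ_descFactorial_succ_eq_add, Nat.succ_descFactorial_succ m (2 * j),
        Nat.factorial_succ]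
      push_cast
      field_simp
      ring
    · simp only [aeval_hermite_succ x (m + 1), Nat.add_sub_cancel, Finset.range_one,
        Finset.sum_singleton, pow_zero, Nat.factorial_zero, mul_zero, Nat.descFactorial_zero]
      push_cast
      field_simp
      ring

lemma tendsto_descFactorial_div_pow {x : ℕ → ℝ} {ρ : ℝ}
    (hx : Tendsto (fun n : ℕ => n / x n) atTop (𝓝 ρ)) (k : ℕ) :
    Tendsto (fun n : ℕ => n.descFactorial k / x n ^ k) atTop (𝓝 (ρ ^ k)) := by
  have h := ((Asymptotics.isEquivalent_iff_tendsto_one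
    ((eventually_ne_atTop 0).mono fun n hn => by positivity)).1
    (isEquivalent_descFactorial k)).mul (hx.pow k)
  rw [one_mul] at h
  refine h.congr' ((eventually_ne_atTop 0).mono fun n hn => ?_)
  have : (n : ℝ) ≠ 0 := Nat.cast_ne_zero.2 hn
  simp only [Pi.div_apply, div_pow]
  field_simp

theorem tendsto_aeval_hermite_div_pow {x : ℕ → ℝ} {ρ : ℝ} (hx₀ : ∀ᶠ n in atTop, x n ≠ 0)
    (hx : Tendsto (fun n : ℕ => n / x n) atTop (𝓝 ρ)) :
    Tendsto (fun n => aeval (x n) (hermite n) / x n ^ n) atTop (𝓝 (Real.exp (-ρ ^ 2 / 2))) := by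
  have hsum : HasSum (fun j : ℕ => (-1 / 2) ^ j / j ! * ρ ^ (2 * j)) (Real.exp (-ρ ^ 2 / 2)) := by
    rw [Real.exp_eq_exp_ℝ]
    refine (NormedSpace.expSeries_div_hasSum_exp (-ρ ^ 2 / 2)).congr_fun fun j => ?_
    rw [pow_mul, div_mul_eq_mul_div, ← mul_pow, neg_div, neg_div, neg_mul, one_div_mul_eq_div]
  have hbound : ∀ᶠ n : ℕ in atTop, ∀ j : ℕ,
      ‖(-1 / 2) ^ j / j ! * (n.descFactorial (2 * j) / x n ^ (2 * j))‖ ≤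
        ((ρ ^ 2 + 1) / 2) ^ j / j ! := by
    filter_upwards [(hx.pow 2).eventually_le_const (lt_add_one (ρ ^ 2))] with n hn j
    calc
      _ = (1 / 2) ^ j / j ! * (n.descFactorial (2 * j) / |x n| ^ (2 * j)) := by simp
      _ ≤ (1 / 2) ^ j / j ! * (n ^ (2 * j) / |x n| ^ (2 * j)) := by
        gcongr
        exact_mod_cast n.descFactorial_le_pow (2 * j)
      _ = (1 / 2) ^ j / j ! * ((n / x n) ^ 2) ^ j := by
        rw [pow_mul, pow_mul, sq_abs]
        simp only [div_pow]
      _ ≤ (1 / 2) ^ j / j ! * (ρ ^ 2 + 1) ^ j := by gcongr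
      _ = _ := by rw [div_pow, div_pow, one_pow]; ring
  rw [← hsum.tsum_eq]
  refine (tendsto_tsum_of_dominated_convergence (Real.summable_pow_div_factorial _)
    (fun j => (tendsto_descFactorial_div_pow hx (2 * j)).const_mul _) hbound).congr' ?_
  filter_upwards [hx₀] with n hn using (hasSum_aeval_hermite_div_pow hn n).tsum_eq

end Asymptotics

section Counting
universe u
open Polynomial

lemma isSeparatedForest_empty_iff {V : Type*} {G : SimpleGraph V} :
    IsSeparatedForest G ∅ ↔ G.IsAcyclic :=
  and_iff_left (Set.pairwise_empty _)

lemma isSeparatedForest_singleton_iff {V : Type*} {G : SimpleGraph V} {v : V} :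
    IsSeparatedForest G {v} ↔ G.IsAcyclic :=
  and_iff_left (Set.pairwise_singleton v _)

lemma isRootedForest_singleton_iff {V : Type*} {G : SimpleGraph V} {v : V} :
    IsRootedForest G {v} ↔ G.IsTree := by
  simp only [IsRootedForest, isSeparatedForest_singleton_iff, Set.mem_singleton_iff,
    exists_eq_left, SimpleGraph.isTree_iff, SimpleGraph.connected_iff_exists_forall_reachable]
  refine and_comm.trans (and_congr_left fun _ => ⟨fun h => ⟨v, h⟩, ?_⟩)
  exact fun ⟨u, hu⟩ w => (hu v).symm.trans (hu w)

lemma not_isRootedForest_empty {V : Type*} [Nonempty V] (G : SimpleGraph V) :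
    ¬IsRootedForest G ∅ := fun h => by
  simpa using h.2 (Classical.arbitrary V)

theorem card_isTree (V : Type u) [Fintype V] [Nonempty V] :
    Nat.card {G : SimpleGraph V // G.IsTree} = Fintype.card V ^ (Fintype.card V - 2) := by
  have hempty ⦃W : Type u⦄ [Finite W] (w : W) :
      (Nat.card {G : SimpleGraph W // IsRootedForest G ∅} : ℤ) =
        0 * Nat.card {G : SimpleGraph W // IsRootedForest G {w}} := by
    have : Nonempty W := ⟨w⟩
    simp [not_isRootedForest_empty]
  obtain ⟨v⟩ := ‹Nonempty V›
  have hcard := isDeletionRecursive_isRootedForest.card_eq markedRecurrence_pow hempty V {v}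
  simp only [Finset.coe_singleton, isRootedForest_singleton_iff, Finset.card_singleton] at hcard
  zify
  rw [hcard]
  rcases hV : Fintype.card V with _ | _ | n
  · exact absurd hV Fintype.card_ne_zero
  · simp
  · rw [Nat.add_sub_cancel, Nat.add_sub_cancel, show n + 1 + 1 - 2 = n by rfl]
    push_cast
    ring

theorem card_isAcyclic (R : Type*) [CommRing R] [IsAddTorsionFree R] (V : Type*) [Fintype V] :
    (Nat.card {G : SimpleGraph V // G.IsAcyclic} : R) =
      aeval (Fintype.card V + 1 : R) (hermite (Fintype.card V)) -
        Fintype.card V * aeval (Fintype.card V + 1 : R) (hermite (Fintype.card V - 1)) := by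
  simpa [isSeparatedForest_empty_iff] using
    isDeletionRecursive_isSeparatedForest.card_eq (markedRecurrence_hermite (R := R))
      (fun V _ v => by simp [isSeparatedForest_empty_iff, isSeparatedForest_singleton_iff]) V ∅

lemma card_isAcyclic_fin_add_three (R : Type*) [CommRing R] [IsAddTorsionFree R] (m : ℕ) :
    (Nat.card {G : SimpleGraph (Fin (m + 3)) // G.IsAcyclic} : R) =
      2 * aeval (m + 4 : R) (hermite (m + 1)) - (m + 1) * aeval (m + 4 : R) (hermite m) := by
  have hm : ((m + 3 : ℕ) : R) + 1 = m + 4 := by push_cast; ring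
  rw [card_isAcyclic, Fintype.card_fin, hm, show m + 3 - 1 = m + 2 by rfl,
    aeval_hermite_succ _ (m + 2), aeval_hermite_succ _ (m + 1)]
  simp only [Nat.add_sub_cancel, show m + 2 - 1 = m + 1 by rfl]
  push_cast
  ring

theorem tendsto_card_isAcyclic_div_pow :
    Tendsto (fun n : ℕ => (Nat.card {G : SimpleGraph (Fin n) // G.IsAcyclic} : ℝ) / n ^ (n - 2))
      atTop (𝓝 (Real.exp (1 / 2))) := by
  have hhermite (c : ℝ) : Tendsto (fun n : ℕ => aeval (n + c) (hermite n) / (n + c) ^ n) atTop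
      (𝓝 (Real.exp (-1 / 2))) := by
    simpa using tendsto_aeval_hermite_div_pow
      ((tendsto_atTop_add_const_right _ c tendsto_natCast_atTop_atTop).eventually_ne_atTop 0)
      (tendsto_natCast_div_add_atTop c)
  have hpow : Tendsto (fun m : ℕ => (1 + 1 / (m + 3 : ℝ)) ^ (m + 1)) atTop (𝓝 (Real.exp 1)) := by
    have h := Real.tendsto_one_add_pow_exp_of_tendsto (g := fun n : ℕ => 1 / (n + 2 : ℝ))
      (by simpa [div_eq_mul_inv] using tendsto_natCast_div_add_atTop (2 : ℝ))
    refine (h.comp (tendsto_add_atTop_nat 1)).congr fun m => ?_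
    simp only [Function.comp_apply, Nat.cast_add_one]
    norm_num [add_assoc]
  have hratio : Tendsto (fun m : ℕ => ((m + 1 : ℕ) : ℝ) / ((m + 1 : ℕ) + 3)) atTop (𝓝 1) :=
    (tendsto_natCast_div_add_atTop 3).comp (tendsto_add_atTop_nat 1)
  have hlim := ((((hhermite 3).comp (tendsto_add_atTop_nat 1)).const_mul 2).sub
    (hratio.mul (hhermite 4))).mul hpow
  rw [show (2 * Real.exp (-1 / 2) - 1 * Real.exp (-1 / 2)) * Real.exp 1 = Real.exp (1 / 2) by
    rw [← sub_mul, mul_assoc, ← Real.exp_add]; norm_num] at hlim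
  rw [← tendsto_add_atTop_iff_nat 3]
  refine hlim.congr fun m => ?_
  have hm : ((m + 1 : ℕ) + 3 : ℝ) = m + 4 := by push_cast; ring
  have hbase : 1 + 1 / (m + 3 : ℝ) = (m + 4) / (m + 3) := by field_simp; ring
  rw [card_isAcyclic_fin_add_three, Function.comp_apply, hm, hbase, div_pow]
  push_cast
  field_simp
  ring

end Counting

/-- The limiting probability that a uniformly random labelled forest on
`Fin n` is connected (i.e. is a tree) equals `e^{-1/2}`. -/
theorem random_forest_connected_probability :
    Tendsto
      (fun n : ℕ =>
        (Nat.card {G : SimpleGraph (Fin n) // G.Connected ∧ G.IsAcyclic} : ℝ) /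
          (Nat.card {G : SimpleGraph (Fin n) // G.IsAcyclic} : ℝ))
      atTop (𝓝 (Real.exp (-(1 / 2 : ℝ)))) := by
  have hforest := tendsto_card_isAcyclic_div_pow.inv₀ (Real.exp_ne_zero _)
  rw [← Real.exp_neg] at hforest
  refine hforest.congr' ((eventually_ge_atTop 1).mono fun n hn => ?_)
  have : NeZero n := ⟨by omega⟩
  simp only [← SimpleGraph.isTree_iff]
  rw [inv_div, card_isTree, Fintype.card_fin, Nat.cast_pow]
end
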